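/- arXiv:1907.02710 — 2 statements merged into one kernel-verified Lean document; each statement's English description precedes it below -/
import Mathlib

section
/- Let θ ∈ [0,1), α > 0, t₀ > 0, γ₁ > 2 and γ₂ ≥ γ₁, and set r = (1 + θ)/2. Let x : [t₀, ∞) → ℝⁿ be a solution of the unperturbed inertial ODE (g ≡ 0) with damping α/t^θ. If F is coercive (F(x) → +∞ as ‖x‖ → ∞) and satisfies hypotheses H1(γ₁) and H2(γ₂), then there exist C > 0 and t₁ ≥ t₀ such that for all t ≥ t₁, F(x(t)) − F* ≤ C · t^{−2rγ₂/(γ₂ − 2)}. -/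
open MeasureTheory
open scoped RealInnerProductSpace

/-!
Let `E = F(x) - F* + ‖x'‖² / 2` be the mechanical energy, let `P` be the metric projection onto the
set of minimizers, put `p = (1 + θ) γ / (γ - 2)`, and consider for a large constant `c` the Lyapunov
function `Φ(t) = t ^ (p + 1) * (E + (c / t) ⟪x - P x, x'⟫)`.

Convexity bounds `Φ'` by `t ^ p` times a multiple of `t ^ (-θ) dist(x, X*)² / t` minus a multiple of
`E`. The growth `K dist(x, X*) ^ γ ≤ E` and Young's inequality absorb the distance into `E` up to an
error `B t ^ (-p)`, so that `Φ' ≤ B` and `Φ` grows at most linearly; this is the bound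
`E = O(t ^ (-p))`.

Since `P` is merely Lipschitz, `Φ` need not be differentiable. Near a time `t`, however,
monotonicity of `P` shows that `Φ` is bounded above, up to `o(s - t)`, by the smooth function in
which `P (x s)` is replaced by the constant `P (x t)`, which is enough for a mean value inequality.
-/

section InertialDecay

open Filter Topology Set

section Projection

variable {H : Type*} [NormedAddCommGroup H] [InnerProductSpace ℝ H]

/-- `P` is the metric projection onto the (convex) set `X`, characterized by the variational
inequality for the nearest point. -/
structure IsMetricProjection (P : H → H) (X : Set H) : Prop where
  mem : ∀ y, P y ∈ X
  inner_nonpos : ∀ y, ∀ w ∈ X, ⟪y - P y, w - P y⟫ ≤ 0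

theorem exists_isMetricProjection {X : Set H} (hne : X.Nonempty) (hcomplete : IsComplete X)
    (hconvex : Convex ℝ X) : ∃ P : H → H, IsMetricProjection P X := by
  choose P hPX hP using exists_norm_eq_iInf_of_complete_convex hne hcomplete hconvex
  exact ⟨P, hPX, fun y ↦ (norm_eq_iInf_iff_real_inner_le_zero hconvex (hPX y)).1 (hP y)⟩

namespace IsMetricProjection

variable {P : H → H} {X : Set H}

theorem norm_sub_eq_infDist (hP : IsMetricProjection P X) (y : H) :
    ‖y - P y‖ = Metric.infDist y X := by
  refine le_antisymm ((Metric.le_infDist ⟨P y, hP.mem y⟩).2 fun w hw ↦ ?_) ?_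
  · have hsq : ‖y - P y‖ ^ 2 ≤ ‖y - P y‖ * ‖y - w‖ := calc
      ‖y - P y‖ ^ 2 = ⟪y - P y, y - w⟫ + ⟪y - P y, w - P y⟫ := by
        rw [← inner_add_right, sub_add_sub_cancel, real_inner_self_eq_norm_sq]
      _ ≤ ‖y - P y‖ * ‖y - w‖ := by
        linarith [hP.inner_nonpos y w hw, real_inner_le_norm (y - P y) (y - w)]
    rw [dist_eq_norm]
    rcases (norm_nonneg (y - P y)).eq_or_lt with hzero | hpos
    · exact hzero ▸ norm_nonneg _
    · exact le_of_mul_le_mul_left (by linarith) hpos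
  · exact dist_eq_norm y (P y) ▸ Metric.infDist_le_dist_of_mem (hP.mem y)

theorem sq_norm_sub_le_inner (hP : IsMetricProjection P X) (y w : H) :
    ‖P y - P w‖ ^ 2 ≤ ⟪P y - P w, y - w⟫ := by
  have hsum : ⟪P y - P w, y - w⟫ =
      ‖P y - P w‖ ^ 2 - ⟪y - P y, P w - P y⟫ - ⟪w - P w, P y - P w⟫ := by
    rw [← real_inner_self_eq_norm_sq, real_inner_comm (P w - P y),
      real_inner_comm (P y - P w) (w - P w), ← neg_sub (P y) (P w), inner_neg_left, sub_neg_eq_add,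
      ← inner_add_right, ← inner_sub_right]
    congr 1
    abel
  linarith [hP.inner_nonpos y (P w) (hP.mem w), hP.inner_nonpos w (P y) (hP.mem y)]

theorem inner_sub_nonneg (hP : IsMetricProjection P X) (y w : H) : 0 ≤ ⟪P y - P w, y - w⟫ :=
  (sq_nonneg _).trans (hP.sq_norm_sub_le_inner y w)

theorem lipschitzWith_one (hP : IsMetricProjection P X) : LipschitzWith 1 P := by
  refine LipschitzWith.mk_one fun y w ↦ ?_
  rw [dist_eq_norm, dist_eq_norm]
  have hsq := (hP.sq_norm_sub_le_inner y w).trans (real_inner_le_norm _ _)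
  rcases (norm_nonneg (P y - P w)).eq_or_lt with hzero | hpos
  · exact hzero ▸ norm_nonneg _
  · exact le_of_mul_le_mul_left (by linarith) hpos

/-- The first-order remainder on the right comes from splitting `u` into the secant slope, against
which the increment of the monotone map `P` has nonnegative inner product, and the deviation
from it. -/
theorem inner_sub_comp_le (hP : IsMetricProjection P X) (x : ℝ → H) {t s : ℝ}
    (hts : t < s) (u : H) :
    ⟪P (x t) - P (x s), u⟫ ≤ (s - t) * (‖slope x t s‖ * ‖u - slope x t s‖) := by
  have hpos : 0 < s - t := sub_pos.2 hts
  have hsecant : (s - t) • slope x t s = x s - x t := sub_smul_slope x t s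
  have hmono : 0 ≤ ⟪P (x s) - P (x t), slope x t s⟫ := by
    have := hP.inner_sub_nonneg (x s) (x t)
    rw [← hsecant, inner_smul_right] at this
    exact nonneg_of_mul_nonneg_right this hpos
  have hlip : ‖P (x t) - P (x s)‖ ≤ (s - t) * ‖slope x t s‖ := calc
    ‖P (x t) - P (x s)‖ ≤ ‖x s - x t‖ := by
      simpa [dist_eq_norm, norm_sub_rev] using hP.lipschitzWith_one.dist_le_mul (x t) (x s)
    _ = (s - t) * ‖slope x t s‖ := by rw [← hsecant, norm_smul, Real.norm_of_nonneg hpos.le]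
  calc ⟪P (x t) - P (x s), u⟫
      = ⟪P (x t) - P (x s), u - slope x t s⟫ - ⟪P (x s) - P (x t), slope x t s⟫ := by
        rw [inner_sub_right, ← neg_sub (P (x s)), inner_neg_left, inner_neg_left]
        ring
    _ ≤ ‖P (x t) - P (x s)‖ * ‖u - slope x t s‖ := by
        linarith [real_inner_le_norm (P (x t) - P (x s)) (u - slope x t s)]
    _ ≤ (s - t) * ‖slope x t s‖ * ‖u - slope x t s‖ := by gcongr
    _ = (s - t) * (‖slope x t s‖ * ‖u - slope x t s‖) := mul_assoc _ _ _

end IsMetricProjection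

end Projection

section RightSlope

theorem eventually_slope_lt_of_touching_majorant {f g ρ : ℝ → ℝ} {t D r : ℝ} (hg : HasDerivAt g D t)
    (htouch : g t = f t) (hρ : Tendsto ρ (𝓝[>] t) (𝓝 0))
    (hfg : ∀ᶠ s in 𝓝[>] t, f s ≤ g s + (s - t) * ρ s) (hr : D < r) :
    ∀ᶠ s in 𝓝[>] t, slope f t s < r := by
  have hlim : Tendsto (fun s ↦ slope g t s + ρ s) (𝓝[>] t) (𝓝 D) := by
    simpa using (hg.tendsto_slope.mono_left (nhdsGT_le_nhdsNE t)).add hρ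
  filter_upwards [hlim.eventually_lt_const hr, hfg, self_mem_nhdsWithin] with s hslope hle hts
  refine lt_of_le_of_lt ?_ hslope
  have hpos : 0 < s - t := sub_pos.2 hts
  rw [slope_def_field, slope_def_field, div_add' _ _ _ hpos.ne']
  gcongr
  linarith

theorem le_add_mul_of_right_slope_le {f : ℝ → ℝ} {a b B : ℝ} (hab : a ≤ b)
    (hf : ContinuousOn f (Icc a b))
    (hslope : ∀ t ∈ Ico a b, ∀ r > B, ∀ᶠ s in 𝓝[>] t, slope f t s < r) :
    f b ≤ f a + B * (b - a) := by
  have hline : ∀ t, HasDerivAt (fun s ↦ f a + B * (s - a)) B t := fun t ↦ by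
    simpa using (((hasDerivAt_id t).sub_const a).const_mul B).const_add (f a)
  exact image_le_of_liminf_slope_right_le_deriv_boundary hf (by simp)
    (fun t _ ↦ (hline t).continuousAt.continuousWithinAt) (fun t _ ↦ (hline t).hasDerivWithinAt)
    (fun t ht r hr ↦ (hslope t ht r hr).frequently) (right_mem_Icc.2 hab)

end RightSlope

section Growth

theorem exists_pos_eventually_mul_le {Y : Type*} [TopologicalSpace Y] {f g : Y → ℝ} {z : Y}
    (hf : ContinuousAt f z) (hg : ContinuousAt g z) (hz : 0 < f z) :
    ∃ K > 0, ∀ᶠ y in 𝓝 z, K * g y ≤ f y := by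
  obtain ⟨K, hK, hlt⟩ := exists_pos_mul_lt hz (g z)
  exact ⟨K, hK, ((hg.const_mul K).eventually_lt hf (by linarith)).mono fun _ ↦ le_of_lt⟩

theorem exists_pos_mul_le_of_isCompact {Y : Type*} [TopologicalSpace Y] {S : Set Y}
    (hS : IsCompact S) {f g : Y → ℝ} (hg : ∀ y, 0 ≤ g y)
    (hlocal : ∀ z ∈ S, ∃ K > 0, ∀ᶠ y in 𝓝 z, K * g y ≤ f y) :
    ∃ K > 0, ∀ y ∈ S, K * g y ≤ f y := by
  refine hS.induction_on (p := fun S ↦ ∃ K > 0, ∀ y ∈ S, K * g y ≤ f y)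
    ⟨1, one_pos, by simp⟩ ?_ ?_ ?_
  · rintro s t hst ⟨K, hK, h⟩
    exact ⟨K, hK, fun y hy ↦ h y (hst hy)⟩
  · rintro s t ⟨K, hK, hs⟩ ⟨L, hL, ht⟩
    refine ⟨min K L, lt_min hK hL, ?_⟩
    rintro y (hy | hy)
    · exact (mul_le_mul_of_nonneg_right (min_le_left _ _) (hg y)).trans (hs y hy)
    · exact (mul_le_mul_of_nonneg_right (min_le_right _ _) (hg y)).trans (ht y hy)
  · intro z hz
    obtain ⟨K, hK, h⟩ := hlocal z hz
    exact ⟨_, mem_nhdsWithin_of_mem_nhds h, K, hK, fun y hy ↦ hy⟩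

theorem exists_pos_mul_infDist_rpow_le_of_isCompact {Y : Type*} [PseudoMetricSpace Y] {S X : Set Y}
    (hS : IsCompact S) {f : Y → ℝ} (hf : Continuous f) (hpos : ∀ y ∉ X, 0 < f y)
    {γ : ℝ} (hγ : 0 ≤ γ)
    (hlocal : ∀ z ∈ X, ∃ K > 0, ∀ᶠ y in 𝓝 z, K * Metric.infDist y X ^ γ ≤ f y) :
    ∃ K > 0, ∀ y ∈ S, K * Metric.infDist y X ^ γ ≤ f y := by
  refine exists_pos_mul_le_of_isCompact hS (fun y ↦ Real.rpow_nonneg Metric.infDist_nonneg γ) ?_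
  intro z _
  by_cases hz : z ∈ X
  · exact hlocal z hz
  · have hdist : Continuous fun y ↦ Metric.infDist y X ^ γ :=
      (Metric.continuous_infDist_pt X).rpow_const fun _ ↦ Or.inr hγ
    exact exists_pos_eventually_mul_le hf.continuousAt hdist.continuousAt (hpos z hz)

theorem isCompact_setOf_le_of_tendsto_cobounded {Y : Type*} [PseudoMetricSpace Y] [ProperSpace Y]
    {F : Y → ℝ} (hF : Continuous F) (hcoercive : Tendsto F (Bornology.cobounded Y) atTop) (M : ℝ) :
    IsCompact {y | F y ≤ M} := by
  refine Metric.isCompact_of_isClosed_isBounded (isClosed_le hF continuous_const) ?_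
  rw [← Bornology.isCobounded_compl_iff]
  filter_upwards [hcoercive.eventually_gt_atTop M] with y hy
  exact not_le.2 hy

theorem exists_pos_mul_infDist_rpow_le_sub_of_coercive {Y : Type*} [PseudoMetricSpace Y]
    [ProperSpace Y] {F : Y → ℝ} (hF : Continuous F)
    (hcoercive : Tendsto F (Bornology.cobounded Y) atTop) {m γ : ℝ} (hm : ∀ y, m ≤ F y) (hγ : 0 ≤ γ)
    (hlocal : ∀ z ∈ {y | F y = m},
      ∃ K > 0, ∀ᶠ y in 𝓝 z, K * Metric.infDist y {y | F y = m} ^ γ ≤ F y - m) (M : ℝ) :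
    ∃ K > 0, ∀ y, F y ≤ M → K * Metric.infDist y {y | F y = m} ^ γ ≤ F y - m :=
  exists_pos_mul_infDist_rpow_le_of_isCompact (f := fun y ↦ F y - m)
    (isCompact_setOf_le_of_tendsto_cobounded hF hcoercive M) (hF.sub continuous_const)
    (fun y hy ↦ sub_pos.2 ((hm y).lt_of_ne' hy)) hγ hlocal

/-- Young's inequality with the conjugate exponents `γ / 2` and `γ / (γ - 2)`. -/
theorem exists_mul_sq_le_add_mul_rpow {γ K A : ℝ} (hγ : 2 < γ) (hK : 0 < K) (hA : 0 ≤ A) :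
    ∃ B ≥ 0, ∀ u d : ℝ, 0 ≤ u → 0 ≤ d → A * u * d ^ 2 ≤ K * d ^ γ + B * u ^ (γ / (γ - 2)) := by
  have : 0 < γ - 2 := by linarith
  have hconj : (γ / 2).HolderConjugate (γ / (γ - 2)) := by
    rw [Real.holderConjugate_iff]
    constructor
    · linarith
    · field_simp
      ring
  set L : ℝ := K ^ (2 / γ) with hL
  have hL0 : 0 < L := Real.rpow_pos_of_pos hK _
  refine ⟨(A / L) ^ (γ / (γ - 2)), by positivity, fun u d hu hd ↦ ?_⟩
  have hdist : (L * d ^ 2) ^ (γ / 2) = K * d ^ γ := by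
    rw [Real.mul_rpow hL0.le (by positivity), hL, ← Real.rpow_mul hK.le, ← Real.rpow_natCast d 2,
      ← Real.rpow_mul hd]
    congr 2
    · rw [show 2 / γ * (γ / 2) = 1 by field_simp, Real.rpow_one]
    · push_cast
      ring
  calc A * u * d ^ 2 = (L * d ^ 2) * (A / L * u) := by field_simp
    _ ≤ (L * d ^ 2) ^ (γ / 2) / (γ / 2) + (A / L * u) ^ (γ / (γ - 2)) / (γ / (γ - 2)) :=
        Real.young_inequality_of_nonneg (by positivity) (by positivity) hconj
    _ ≤ (L * d ^ 2) ^ (γ / 2) + (A / L * u) ^ (γ / (γ - 2)) :=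
        add_le_add (div_le_self (by positivity) hconj.lt.le)
          (div_le_self (by positivity) hconj.symm.lt.le)
    _ = K * d ^ γ + (A / L) ^ (γ / (γ - 2)) * u ^ (γ / (γ - 2)) := by
        rw [hdist, Real.mul_rpow (by positivity) hu]

theorem exists_damping_mul_sq_le_add_mul_rpow {γ K A α : ℝ} (θ : ℝ) (hγ : 2 < γ) (hK : 0 < K)
    (hA : 0 ≤ A) (hα : 0 ≤ α) :
    ∃ B ≥ 0, ∀ t d : ℝ, 0 < t → 0 ≤ d →
      A * (α / t ^ θ * t⁻¹) * d ^ 2 ≤ K * d ^ γ + B * t ^ (-((1 + θ) * γ / (γ - 2))) := by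
  obtain ⟨B, hB, hyoung⟩ := exists_mul_sq_le_add_mul_rpow hγ hK (mul_nonneg hA hα)
  refine ⟨B, hB, fun t d ht hd ↦ ?_⟩
  calc A * (α / t ^ θ * t⁻¹) * d ^ 2 = A * α * t ^ (-(1 + θ)) * d ^ 2 := by
        rw [Real.rpow_neg ht.le, Real.rpow_add ht, Real.rpow_one]
        ring
    _ ≤ K * d ^ γ + B * (t ^ (-(1 + θ))) ^ (γ / (γ - 2)) := hyoung _ _ (by positivity) hd
    _ = K * d ^ γ + B * t ^ (-((1 + θ) * γ / (γ - 2))) := by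
        rw [← Real.rpow_mul ht.le, neg_mul, mul_div_assoc]

theorem eventually_mul_inv_le_div_rpow (A : ℝ) {α θ : ℝ} (hα : 0 < α) (hθ : θ < 1) :
    ∀ᶠ t : ℝ in atTop, A * t⁻¹ ≤ α / t ^ θ := by
  filter_upwards [(tendsto_rpow_atTop (sub_pos.2 hθ)).eventually_ge_atTop (A / α),
    eventually_gt_atTop 0] with t ht ht0
  rw [Real.rpow_sub ht0, Real.rpow_one, div_le_div_iff₀ hα (by positivity)] at ht
  rw [← div_eq_mul_inv, div_le_div_iff₀ ht0 (by positivity)]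
  linarith

end Growth

section Gradient

variable {H : Type*} [NormedAddCommGroup H] [InnerProductSpace ℝ H] [CompleteSpace H] {F : H → ℝ}

theorem hasDerivAt_comp_gradient {y : ℝ → H} {v : H} {t : ℝ} (hF : DifferentiableAt ℝ F (y t))
    (hy : HasDerivAt y v t) : HasDerivAt (fun s ↦ F (y s)) ⟪gradient F (y t), v⟫ t :=
  hF.hasGradientAt.hasFDerivAt.comp_hasDerivAt t hy

theorem sub_le_inner_gradient_of_convexOn (hconv : ConvexOn ℝ univ F) {y : H}
    (hF : DifferentiableAt ℝ F y) (z : H) : F y - F z ≤ ⟪gradient F y, y - z⟫ := by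
  set ℓ : ℝ →ᵃ[ℝ] H := AffineMap.lineMap y z with hℓ
  have hderiv : HasDerivAt (F ∘ ℓ) ⟪gradient F y, z - y⟫ 0 := by
    have hline : HasDerivAt ℓ (z - y) 0 := AffineMap.hasDerivAt_lineMap
    have hzero : ℓ 0 = y := AffineMap.lineMap_apply_zero y z
    have hcomp := hasDerivAt_comp_gradient (hzero.symm ▸ hF) hline
    rwa [hzero] at hcomp
  have hslope :=
    (hconv.comp_affineMap ℓ).le_slope_of_hasDerivAt (mem_univ 0) (mem_univ 1) one_pos hderiv
  simp only [slope_def_field, hℓ, Function.comp_apply, AffineMap.lineMap_apply_one,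
    AffineMap.lineMap_apply_zero, sub_zero, div_one] at hslope
  rw [← neg_sub z y, inner_neg_right]
  linarith

end Gradient

/-- `x` solves the damped inertial gradient system `x'' + μ(t) x' + ∇F(x) = 0` on `[t₀, ∞)`; the
functions `v` and `a` are its velocity and acceleration. -/
structure IsInertialTrajectory {H : Type*} [NormedAddCommGroup H] [InnerProductSpace ℝ H]
    [CompleteSpace H] (F : H → ℝ) (μ : ℝ → ℝ) (t₀ : ℝ) (x v a : ℝ → H) : Prop where
  hasDerivAt_position : ∀ t ∈ Ici t₀, HasDerivAt x (v t) t
  hasDerivAt_velocity : ∀ t ∈ Ici t₀, HasDerivAt v (a t) t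
  newton : ∀ t ∈ Ici t₀, a t + μ t • v t + gradient F (x t) = 0

/-- The mechanical energy of a motion with position `x` and velocity `v` in the potential `F`,
normalized by the reference level `m` (in practice the minimum of `F`). -/
noncomputable def mechanicalEnergy {H : Type*} [NormedAddCommGroup H] (F : H → ℝ) (m : ℝ)
    (x v : ℝ → H) (t : ℝ) : ℝ :=
  F (x t) - m + ‖v t‖ ^ 2 / 2

/-- The energy corrected by the cross term `(c / t) ⟪x - z, v⟫` relative to an anchor point `z`
and rescaled by `t ^ k`. It decays well along trajectories when `z` is the projection of `x t` onto
the set of minimizers; keeping `z` as a parameter makes it differentiable in `t`. -/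
noncomputable def anchoredLyapunov {H : Type*} [NormedAddCommGroup H] [InnerProductSpace ℝ H]
    (F : H → ℝ) (m c k : ℝ) (x v : ℝ → H) (z : H) (t : ℝ) : ℝ :=
  t ^ k * (mechanicalEnergy F m x v t + c * t⁻¹ * ⟪x t - z, v t⟫)

section ScalarInequalities

variable {E v d h q i c τ : ℝ}

/-- With `i = 1 / t`, the left-hand side is `t ^ (-k)` times the derivative of `anchoredLyapunov`,
where `v` and `d` are norms of velocity and displacement, `h` is their inner product, `q` the
damping, and `g` the inner product of gradient and displacement. -/
theorem lyapunov_rate_le {k g : ℝ} (hi : 0 < i) (hE : 0 ≤ E) (hk : |k| + 1 ≤ c)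
    (hg : E - v ^ 2 / 2 ≤ g) (hh : |h| ≤ d * v) (hq : 8 * c * i ≤ q)
    (hd : 2 * c ^ 2 * (q * i) * d ^ 2 ≤ E + τ) :
    k * i * (E + c * i * h) - q * v ^ 2 - c * i ^ 2 * h + c * i * (v ^ 2 - q * h - g) ≤ i * τ := by
  obtain ⟨hk₁, hk₂⟩ := abs_le.1 (le_sub_iff_add_le.2 hk)
  have hc : 0 < c := by linarith
  have hci : 0 < c * i := mul_pos hc hi
  have hq0 : 0 < q := by linarith
  have hcoeff : |(k - 1) * i - q| ≤ 2 * q := by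
    have hki : |(k - 1) * i| ≤ c * i := by
      rw [abs_mul, abs_of_pos hi]
      gcongr
      exact abs_le.2 ⟨by linarith, by linarith⟩
    obtain ⟨hlower, hupper⟩ := abs_le.1 hki
    exact abs_le.2 ⟨by linarith, by linarith⟩
  have hcross : c * i * (((k - 1) * i - q) * h) ≤ c * i * (2 * q * (d * v)) := by
    refine mul_le_mul_of_nonneg_left ?_ hci.le
    calc ((k - 1) * i - q) * h ≤ |(k - 1) * i - q| * |h| := abs_mul _ h ▸ le_abs_self _
      _ ≤ 2 * q * (d * v) := by gcongr
  have hyoung : c * i * (2 * q * (d * v)) ≤ q / 2 * v ^ 2 + i * (2 * c ^ 2 * (q * i) * d ^ 2) := by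
    have : 0 ≤ q / 2 * (v - 2 * (c * i) * d) ^ 2 := by positivity
    linarith
  have hconvex : c * i * (E - v ^ 2 / 2) ≤ c * i * g := by gcongr
  have hdist : i * (2 * c ^ 2 * (q * i) * d ^ 2) ≤ i * (E + τ) := by gcongr
  have hdecay : (k - c) * (i * E) ≤ -1 * (i * E) := by
    gcongr
    linarith
  have hdamping : 8 * c * i * v ^ 2 ≤ q * v ^ 2 := by gcongr
  have hkinetic : 0 ≤ c * i * v ^ 2 := by positivity
  linarith

theorem energy_le_four_mul_corrected_energy (hi : 0 < i) (hc : 1 ≤ c) (hτ : 0 ≤ τ)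
    (hv : v ^ 2 / 2 ≤ E) (hh : |h| ≤ d * v) (hq : 8 * c * i ≤ q)
    (hd : 2 * c ^ 2 * (q * i) * d ^ 2 ≤ E + τ) :
    E ≤ 4 * (E + c * i * h + τ) := by
  have hq' : 8 * i ≤ q := calc
    8 * i ≤ 8 * c * i := by
      gcongr
      linarith
    _ ≤ q := hq
  have hcross : -(c * i * h) ≤ c * i * (d * v) := by
    rw [← mul_neg]
    gcongr
    linarith [neg_abs_le h]
  have hyoung : c * i * (d * v) ≤ v ^ 2 / 4 + (c * i * d) ^ 2 := by
    linarith [sq_nonneg (v / 2 - c * i * d)]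
  have hdist : 16 * (c * i * d) ^ 2 ≤ E + τ := calc
    16 * (c * i * d) ^ 2 = 2 * c ^ 2 * (8 * i * i) * d ^ 2 := by ring
    _ ≤ 2 * c ^ 2 * (q * i) * d ^ 2 := by gcongr
    _ ≤ E + τ := hd
  linarith [sq_nonneg v]

end ScalarInequalities

namespace IsInertialTrajectory

variable {H : Type*} [NormedAddCommGroup H] [InnerProductSpace ℝ H] [CompleteSpace H]
  {F : H → ℝ} {μ : ℝ → ℝ} {t₀ t : ℝ} {x v a : ℝ → H}

theorem inner_acceleration (traj : IsInertialTrajectory F μ t₀ x v a) (ht : t₀ ≤ t) (w : H) :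
    ⟪w, a t⟫ = -(μ t * ⟪w, v t⟫) - ⟪gradient F (x t), w⟫ := by
  have ha : a t = -(μ t • v t) - gradient F (x t) :=
    eq_sub_of_add_eq (eq_neg_of_add_eq_zero_left (by rw [← traj.newton t ht]; abel))
  rw [ha, inner_sub_right, inner_neg_right, real_inner_smul_right, real_inner_comm w]

theorem hasDerivAt_mechanicalEnergy (traj : IsInertialTrajectory F μ t₀ x v a)
    (hF : Differentiable ℝ F) (m : ℝ) (ht : t₀ ≤ t) :
    HasDerivAt (mechanicalEnergy F m x v) (-(μ t * ‖v t‖ ^ 2)) t := by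
  have hpotential := hasDerivAt_comp_gradient (hF (x t)) (traj.hasDerivAt_position t ht)
  have hkinetic := (traj.hasDerivAt_velocity t ht).norm_sq.div_const 2
  refine ((hpotential.sub_const m).add hkinetic).congr_deriv ?_
  rw [traj.inner_acceleration ht, real_inner_self_eq_norm_sq]
  ring

theorem antitoneOn_mechanicalEnergy (traj : IsInertialTrajectory F μ t₀ x v a)
    (hF : Differentiable ℝ F) (hμ : ∀ t ≥ t₀, 0 ≤ μ t) (m : ℝ) :
    AntitoneOn (mechanicalEnergy F m x v) (Ici t₀) := by
  have hderiv : ∀ t ∈ Ici t₀, HasDerivAt (mechanicalEnergy F m x v) (-(μ t * ‖v t‖ ^ 2)) t :=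
    fun t ht ↦ traj.hasDerivAt_mechanicalEnergy hF m ht
  refine antitoneOn_of_deriv_nonpos (convex_Ici t₀)
    (fun t ht ↦ (hderiv t ht).continuousAt.continuousWithinAt)
    (fun t ht ↦ (hderiv t (interior_subset ht)).differentiableAt.differentiableWithinAt) ?_
  intro t ht
  have ht' : t ∈ Ici t₀ := interior_subset ht
  rw [(hderiv t ht').deriv, neg_nonpos]
  exact mul_nonneg (hμ t ht') (sq_nonneg _)

theorem hasDerivAt_inner_sub_velocity (traj : IsInertialTrajectory F μ t₀ x v a) (z : H)
    (ht : t₀ ≤ t) :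
    HasDerivAt (fun s ↦ ⟪x s - z, v s⟫)
      (‖v t‖ ^ 2 - μ t * ⟪x t - z, v t⟫ - ⟪gradient F (x t), x t - z⟫) t := by
  refine (((traj.hasDerivAt_position t ht).sub_const z).inner ℝ
    (traj.hasDerivAt_velocity t ht)).congr_deriv ?_
  rw [traj.inner_acceleration ht, real_inner_self_eq_norm_sq]
  ring

theorem hasDerivAt_anchoredLyapunov (traj : IsInertialTrajectory F μ t₀ x v a)
    (hF : Differentiable ℝ F) (m c k : ℝ) (z : H) (ht : t₀ ≤ t) (ht0 : 0 < t) :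
    HasDerivAt (anchoredLyapunov F m c k x v z)
      (t ^ k * (k * t⁻¹ * (mechanicalEnergy F m x v t + c * t⁻¹ * ⟪x t - z, v t⟫)
        - μ t * ‖v t‖ ^ 2 - c * t⁻¹ ^ 2 * ⟪x t - z, v t⟫
        + c * t⁻¹ * (‖v t‖ ^ 2 - μ t * ⟪x t - z, v t⟫ - ⟪gradient F (x t), x t - z⟫))) t := by
  have hpow : HasDerivAt (fun s : ℝ ↦ s ^ k) (t ^ k * (k * t⁻¹)) t := by
    refine (Real.hasDerivAt_rpow_const (Or.inl ht0.ne')).congr_deriv ?_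
    rw [Real.rpow_sub_one ht0.ne']
    ring
  have hcross :=
    ((hasDerivAt_inv ht0.ne').const_mul c).mul (traj.hasDerivAt_inner_sub_velocity z ht)
  refine (hpow.mul ((traj.hasDerivAt_mechanicalEnergy hF m ht).add hcross)).congr_deriv ?_
  simp only [Pi.add_apply, Pi.mul_apply]
  ring

section Lyapunov

variable {P : H → H} {X : Set H} {m c k : ℝ}

theorem continuousAt_anchoredLyapunov_comp (traj : IsInertialTrajectory F μ t₀ x v a)
    (hF : Differentiable ℝ F) (hP : Continuous P) (ht : t₀ ≤ t) (ht0 : 0 < t) :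
    ContinuousAt (fun s ↦ anchoredLyapunov F m c k x v (P (x s)) s) t := by
  have hx := (traj.hasDerivAt_position t ht).continuousAt
  have hdisp : ContinuousAt (fun s ↦ x s - P (x s)) t := hx.sub (hP.continuousAt.comp hx)
  have hinner := hdisp.inner (𝕜 := ℝ) (traj.hasDerivAt_velocity t ht).continuousAt
  exact (Real.continuousAt_rpow_const t k (Or.inl ht0.ne')).mul
    ((traj.hasDerivAt_mechanicalEnergy hF m ht).continuousAt.add
      ((continuousAt_const.mul (continuousAt_inv₀ ht0.ne')).mul hinner))

theorem eventually_slope_anchoredLyapunov_lt (traj : IsInertialTrajectory F μ t₀ x v a)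
    (hP : IsMetricProjection P X) (hc : 0 ≤ c) (ht : t₀ ≤ t) (ht0 : 0 < t) {D r : ℝ}
    (hD : HasDerivAt (anchoredLyapunov F m c k x v (P (x t))) D t) (hr : D < r) :
    ∀ᶠ s in 𝓝[>] t, slope (fun s ↦ anchoredLyapunov F m c k x v (P (x s)) s) t s < r := by
  set weight : ℝ → ℝ := fun s ↦ s ^ k * (c * s⁻¹)
  have hweight : Tendsto weight (𝓝[>] t) (𝓝 (weight t)) :=
    ((Real.continuousAt_rpow_const t k (Or.inl ht0.ne')).mul
      (continuousAt_const.mul (continuousAt_inv₀ ht0.ne'))).tendsto.mono_left nhdsWithin_le_nhds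
  have hslope : Tendsto (slope x t) (𝓝[>] t) (𝓝 (v t)) :=
    (traj.hasDerivAt_position t ht).tendsto_slope.mono_left (nhdsGT_le_nhdsNE t)
  have hv : Tendsto v (𝓝[>] t) (𝓝 (v t)) :=
    (traj.hasDerivAt_velocity t ht).continuousAt.tendsto.mono_left nhdsWithin_le_nhds
  have hremainder :
      Tendsto (fun s ↦ weight s * (‖slope x t s‖ * ‖v s - slope x t s‖)) (𝓝[>] t) (𝓝 0) := by
    simpa using hweight.mul (hslope.norm.mul (hv.sub hslope).norm)
  refine eventually_slope_lt_of_touching_majorant hD rfl hremainder ?_ hr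
  filter_upwards [self_mem_nhdsWithin] with s (hts : t < s)
  have hs0 : 0 < s := ht0.trans hts
  have : 0 ≤ weight s := by positivity
  calc anchoredLyapunov F m c k x v (P (x s)) s
      = anchoredLyapunov F m c k x v (P (x t)) s + weight s * ⟪P (x t) - P (x s), v s⟫ := by
        simp only [anchoredLyapunov, weight, inner_sub_left]
        ring
    _ ≤ anchoredLyapunov F m c k x v (P (x t)) s
          + weight s * ((s - t) * (‖slope x t s‖ * ‖v s - slope x t s‖)) := by
        gcongr
        exact hP.inner_sub_comp_le x hts (v s)
    _ = anchoredLyapunov F m c k x v (P (x t)) s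
          + (s - t) * (weight s * (‖slope x t s‖ * ‖v s - slope x t s‖)) := by ring

theorem exists_hasDerivAt_anchoredLyapunov_le (traj : IsInertialTrajectory F μ t₀ x v a)
    (hF : Differentiable ℝ F) (hconv : ConvexOn ℝ univ F) (hm : ∀ y, m ≤ F y) {z : H} (hz : F z = m)
    {p B : ℝ} (hc : |p + 1| + 1 ≤ c) (ht : t₀ ≤ t) (ht0 : 0 < t) (hμ : 8 * c * t⁻¹ ≤ μ t)
    (hdist : 2 * c ^ 2 * (μ t * t⁻¹) * ‖x t - z‖ ^ 2 ≤ mechanicalEnergy F m x v t + B * t ^ (-p)) :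
    ∃ D ≤ B, HasDerivAt (anchoredLyapunov F m c (p + 1) x v z) D t := by
  refine ⟨_, ?_, traj.hasDerivAt_anchoredLyapunov hF m c (p + 1) z ht ht0⟩
  have hE : 0 ≤ mechanicalEnergy F m x v t := add_nonneg (sub_nonneg.2 (hm _)) (by positivity)
  have hgrad : mechanicalEnergy F m x v t - ‖v t‖ ^ 2 / 2 ≤ ⟪gradient F (x t), x t - z⟫ := by
    simpa [mechanicalEnergy, hz] using sub_le_inner_gradient_of_convexOn hconv (hF (x t)) z
  have hrate := lyapunov_rate_le (inv_pos.2 ht0) hE hc hgrad (abs_real_inner_le_norm _ _) hμ hdist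
  calc _ ≤ t ^ (p + 1) * (t⁻¹ * (B * t ^ (-p))) := by gcongr
    _ = B * (t * t⁻¹) * (t ^ p * t ^ (-p)) := by
      rw [Real.rpow_add_one ht0.ne']
      ring
    _ = B := by rw [mul_inv_cancel₀ ht0.ne', ← Real.rpow_add ht0]; simp

theorem anchoredLyapunov_comp_le_add_mul (traj : IsInertialTrajectory F μ t₀ x v a)
    (hF : Differentiable ℝ F) (hconv : ConvexOn ℝ univ F) (hm : ∀ y, m ≤ F y)
    (hP : IsMetricProjection P X) (hX : ∀ z ∈ X, F z = m) {p B t₁ T : ℝ} (hc : |p + 1| + 1 ≤ c)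
    (ht₁ : t₀ ≤ t₁) (ht₁0 : 0 < t₁) (hμ : ∀ t ≥ t₁, 8 * c * t⁻¹ ≤ μ t)
    (hdist : ∀ t ≥ t₁, 2 * c ^ 2 * (μ t * t⁻¹) * ‖x t - P (x t)‖ ^ 2 ≤
      mechanicalEnergy F m x v t + B * t ^ (-p)) (hT : t₁ ≤ T) :
    anchoredLyapunov F m c (p + 1) x v (P (x T)) T ≤
      anchoredLyapunov F m c (p + 1) x v (P (x t₁)) t₁ + B * (T - t₁) := by
  refine le_add_mul_of_right_slope_le
    (f := fun s ↦ anchoredLyapunov F m c (p + 1) x v (P (x s)) s) hT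
    (fun t ht ↦ ?_) fun t ht r hr ↦ ?_
  · exact (traj.continuousAt_anchoredLyapunov_comp hF hP.lipschitzWith_one.continuous
      (ht₁.trans ht.1) (ht₁0.trans_le ht.1)).continuousWithinAt
  · have ht0 : 0 < t := ht₁0.trans_le ht.1
    obtain ⟨D, hDB, hD⟩ := traj.exists_hasDerivAt_anchoredLyapunov_le hF hconv hm
      (hX _ (hP.mem (x t))) hc (ht₁.trans ht.1) ht0 (hμ t ht.1) (hdist t ht.1)
    have hc0 : 0 ≤ c := by linarith [abs_nonneg (p + 1)]
    exact traj.eventually_slope_anchoredLyapunov_lt hP hc0 (ht₁.trans ht.1) ht0 hD (hDB.trans_lt hr)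

theorem exists_mechanicalEnergy_le_mul_rpow (traj : IsInertialTrajectory F μ t₀ x v a)
    (hF : Differentiable ℝ F) (hconv : ConvexOn ℝ univ F) (hm : ∀ y, m ≤ F y)
    (hP : IsMetricProjection P X) (hX : ∀ z ∈ X, F z = m) {p B t₁ : ℝ} (hB : 0 ≤ B)
    (hc : |p + 1| + 1 ≤ c) (ht₁ : t₀ ≤ t₁) (ht₁1 : 1 ≤ t₁) (hμ : ∀ t ≥ t₁, 8 * c * t⁻¹ ≤ μ t)
    (hdist : ∀ t ≥ t₁, 2 * c ^ 2 * (μ t * t⁻¹) * ‖x t - P (x t)‖ ^ 2 ≤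
      mechanicalEnergy F m x v t + B * t ^ (-p)) :
    ∃ C > 0, ∀ t ≥ t₁, mechanicalEnergy F m x v t ≤ C * t ^ (-p) := by
  set Φ : ℝ → ℝ := fun s ↦ anchoredLyapunov F m c (p + 1) x v (P (x s)) s with hΦ
  refine ⟨4 * (|Φ t₁| + B + B) + 1, by positivity, fun t ht ↦ ?_⟩
  have ht0 : 0 < t := one_pos.trans_le (ht₁1.trans ht)
  set W : ℝ := mechanicalEnergy F m x v t + c * t⁻¹ * ⟪x t - P (x t), v t⟫ with hW
  have hlinear : Φ t ≤ (|Φ t₁| + B) * t := calc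
    Φ t ≤ Φ t₁ + B * (t - t₁) :=
      traj.anchoredLyapunov_comp_le_add_mul hF hconv hm hP hX hc ht₁ (one_pos.trans_le ht₁1) hμ
        hdist ht
    _ ≤ |Φ t₁| * t + B * t := by
      have hstart : Φ t₁ ≤ |Φ t₁| * t :=
        (le_abs_self _).trans (le_mul_of_one_le_right (abs_nonneg _) (ht₁1.trans ht))
      gcongr
      linarith
    _ = (|Φ t₁| + B) * t := by ring
  have hWle : W ≤ (|Φ t₁| + B) * t ^ (-p) := by
    have hΦW : Φ t = W * t ^ p * t := by
      simp only [hΦ, hW, anchoredLyapunov, Real.rpow_add_one ht0.ne']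
      ring
    rw [Real.rpow_neg ht0.le, ← div_eq_mul_inv, le_div_iff₀ (by positivity)]
    exact le_of_mul_le_mul_right (hΦW ▸ hlinear) ht0
  have henergy : mechanicalEnergy F m x v t ≤ 4 * (W + B * t ^ (-p)) :=
    energy_le_four_mul_corrected_energy (inv_pos.2 ht0) (by linarith [abs_nonneg (p + 1)])
      (by positivity) (by simpa [mechanicalEnergy] using hm (x t)) (abs_real_inner_le_norm _ _)
      (hμ t ht) (hdist t ht)
  have hdecay : 0 < t ^ (-p) := by positivity
  linarith

end Lyapunov

theorem exists_mechanicalEnergy_le_of_growth {α θ γ K m : ℝ}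
    (traj : IsInertialTrajectory F (fun t ↦ α / t ^ θ) t₀ x v a) (hα : 0 < α) (hθ : θ < 1)
    (hγ : 2 < γ) (hK : 0 < K) (hF : Differentiable ℝ F) (hconv : ConvexOn ℝ univ F)
    (hm : ∀ y, m ≤ F y) (hne : {y | F y = m}.Nonempty)
    (hgrowth : ∀ t ≥ t₀, K * Metric.infDist (x t) {y | F y = m} ^ γ ≤ F (x t) - m) :
    ∃ C > 0, ∃ t₁ ≥ t₀, ∀ t ≥ t₁,
      mechanicalEnergy F m x v t ≤ C * t ^ (-((1 + θ) * γ / (γ - 2))) := by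
  have hargmin : {y | F y = m} = {y | F y ≤ m} := Set.ext fun y ↦ (hm y).ge_iff_eq'.symm
  obtain ⟨P, hP⟩ := exists_isMetricProjection hne
    (isClosed_eq hF.continuous continuous_const).isComplete
    (by simpa [hargmin] using hconv.convex_le m)
  set p : ℝ := (1 + θ) * γ / (γ - 2)
  set c : ℝ := |p + 1| + 1
  have : 0 < c := by positivity
  obtain ⟨B, hB, hyoung⟩ :=
    exists_damping_mul_sq_le_add_mul_rpow θ hγ hK (by positivity : 0 ≤ 2 * c ^ 2) hα.le
  obtain ⟨t₁, ht₁, ht₁1, hdamping⟩ : ∃ t₁ ≥ t₀, 1 ≤ t₁ ∧ ∀ t ≥ t₁, 8 * c * t⁻¹ ≤ α / t ^ θ := by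
    obtain ⟨T, hT⟩ := eventually_atTop.1 (eventually_mul_inv_le_div_rpow (8 * c) hα hθ)
    exact ⟨max t₀ (max 1 T), le_max_left _ _, by simp, fun t ht ↦ hT t (by simp_all)⟩
  have hdist : ∀ t ≥ t₁, 2 * c ^ 2 * (α / t ^ θ * t⁻¹) * ‖x t - P (x t)‖ ^ 2 ≤
      mechanicalEnergy F m x v t + B * t ^ (-p) := by
    intro t ht
    have ht0 : 0 < t := one_pos.trans_le (ht₁1.trans ht)
    refine (hyoung t _ ht0 (norm_nonneg _)).trans ?_
    rw [hP.norm_sub_eq_infDist]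
    gcongr
    exact (hgrowth t (ht₁.trans ht)).trans (le_add_of_nonneg_right (by positivity))
  obtain ⟨C, hC, hle⟩ := traj.exists_mechanicalEnergy_le_mul_rpow hF hconv hm hP (fun _ hz ↦ hz) hB
    le_rfl ht₁ ht₁1 hdamping hdist
  exact ⟨C, hC, t₁, ht₁, hle⟩

end IsInertialTrajectory

theorem stmt_7_general {H : Type*} [NormedAddCommGroup H] [InnerProductSpace ℝ H] [ProperSpace H]
    (F : H → ℝ) (Fstar : ℝ) (Xstar : Set H) (hXstar : Xstar = {z | ∀ y, F z ≤ F y})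
    (hne : Xstar.Nonempty) (hFstar : ∀ z ∈ Xstar, F z = Fstar)
    (hconv : ConvexOn ℝ univ F) (hdiff : Differentiable ℝ F)
    (α t₀ θ γ : ℝ) (hα : 0 < α) (ht₀ : 0 < t₀) (hθ : θ < 1) (hγ : 2 < γ)
    (x v a : ℝ → H) (traj : IsInertialTrajectory F (fun t ↦ α / t ^ θ) t₀ x v a)
    (hcoercive : Tendsto F (Bornology.cobounded H) atTop)
    (hgrowth : ∀ z ∈ Xstar, ∃ K > 0, ∃ ε > 0, ∀ y,
      ‖y - z‖ < ε → K * Metric.infDist y Xstar ^ γ ≤ F y - Fstar) :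
    ∃ C > 0, ∃ t₁ ≥ t₀, ∀ t ≥ t₁, F (x t) - Fstar ≤ C * t ^ (-((1 + θ) * γ / (γ - 2))) := by
  obtain ⟨z, hz⟩ := hne
  have hmin : ∀ y, Fstar ≤ F y :=
    hFstar z hz ▸ (hXstar ▸ hz : z ∈ {z | ∀ y, F z ≤ F y})
  obtain rfl : Xstar = {y | F y = Fstar} := by
    refine Subset.antisymm hFstar fun y (hy : F y = Fstar) ↦ ?_
    rw [hXstar]
    exact fun w ↦ hy.trans_le (hmin w)
  have hpotential : ∀ t, F (x t) - Fstar ≤ mechanicalEnergy F Fstar x v t :=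
    fun t ↦ le_add_of_nonneg_right (by positivity)
  have hantitone := traj.antitoneOn_mechanicalEnergy hdiff
    (fun t ht ↦ div_nonneg hα.le (Real.rpow_nonneg (ht₀.le.trans ht) θ)) Fstar
  have hlocal : ∀ z ∈ {y | F y = Fstar}, ∃ K > 0, ∀ᶠ y in 𝓝 z,
      K * Metric.infDist y {y | F y = Fstar} ^ γ ≤ F y - Fstar := fun z hz ↦ by
    obtain ⟨K, hK, ε, hε, hle⟩ := hgrowth z hz
    refine ⟨K, hK, ?_⟩
    filter_upwards [Metric.ball_mem_nhds z hε] with y hy using hle y (mem_ball_iff_norm.1 hy)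
  obtain ⟨K, hK, hKle⟩ := exists_pos_mul_infDist_rpow_le_sub_of_coercive hdiff.continuous hcoercive
    hmin (two_pos.trans hγ).le hlocal (Fstar + mechanicalEnergy F Fstar x v t₀)
  obtain ⟨C, hC, t₁, ht₁, hle⟩ := traj.exists_mechanicalEnergy_le_of_growth hα hθ hγ hK hdiff hconv
    hmin ⟨z, hz⟩ fun t ht ↦ hKle (x t) (sub_le_iff_le_add'.1
      ((hpotential t).trans (hantitone self_mem_Ici ht ht)))
  exact ⟨C, hC, t₁, ht₁, fun t ht ↦ (hpotential t).trans (hle t ht)⟩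

end InertialDecay

theorem stmt_7
    {n : ℕ} (hn : 1 ≤ n)
    (F : EuclideanSpace ℝ (Fin n) → ℝ) (Fstar : ℝ)
    (Xstar : Set (EuclideanSpace ℝ (Fin n)))
    (hXstar : Xstar = {z | ∀ y, F z ≤ F y})
    (hne : Xstar.Nonempty)
    (hFstar : ∀ z ∈ Xstar, F z = Fstar)
    (hconv : ConvexOn ℝ Set.univ F)
    (hdiff : Differentiable ℝ F)
    (α t₀ θ γ₁ γ₂ r : ℝ) (hα : 0 < α) (ht₀ : 0 < t₀) (hθ : 0 ≤ θ) (hθ1 : θ < 1)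
    (hγ₁ : 2 < γ₁) (hγ₁₂ : γ₁ ≤ γ₂) (hr : r = (1 + θ) / 2)
    (x x' x'' : ℝ → EuclideanSpace ℝ (Fin n))
    (hx : ∀ t ∈ Set.Ici t₀, HasDerivAt x (x' t) t)
    (hx'd : ∀ t ∈ Set.Ici t₀, HasDerivAt x' (x'' t) t)
    (hx''c : ContinuousOn x'' (Set.Ici t₀))
    (hode : ∀ t ∈ Set.Ici t₀, x'' t + (α / t ^ θ) • x' t + gradient F (x t) = 0)
    (hcoer : Filter.Tendsto F (Filter.comap norm Filter.atTop) Filter.atTop)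
    (hH1 : ∀ z ∈ Xstar, ∃ η > 0, ∀ y : EuclideanSpace ℝ (Fin n),
      ‖y - z‖ < η → F y - Fstar ≤ (1 / γ₁) * ⟪gradient F y, y - z⟫)
    (hH2 : ∀ z ∈ Xstar, ∃ K > 0, ∃ ε > 0, ∀ y : EuclideanSpace ℝ (Fin n),
      ‖y - z‖ < ε → K * Metric.infDist y Xstar ^ (γ₂ : ℝ) ≤ F y - Fstar)
    :
    ∃ C > 0, ∃ t₁ ≥ t₀, ∀ t ≥ t₁,
      F (x t) - Fstar ≤ C * t ^ (-(2 * r * γ₂ / (γ₂ - 2))) := by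
  rw [show 2 * r = 1 + θ by rw [hr]; ring]
  exact stmt_7_general F Fstar Xstar hXstar hne hFstar hconv hdiff α t₀ θ γ₂ hα ht₀ hθ1
    (hγ₁.trans_le hγ₁₂) x x' x'' ⟨hx, hx'd, hode⟩
    (comap_norm_atTop (E := EuclideanSpace ℝ (Fin n)) ▸ hcoer) hH2
end

section
/- Let α > 0, θ ∈ [0,1], t₀ > 0 and γ > 2, and set r = (1 + θ)/2. Let x : [t₀, ∞) → ℝⁿ be a solution of the perturbed inertial ODE with damping α/t^θ. Assume that ∫_{t₀}^∞ t^{rγ/(γ − 2)} ‖g(t)‖ dt < ∞, that F satisfies hypotheses H1(γ) and H2(γ) and admits a unique minimizer, and that either (θ = 1 and α ≥ (γ + 2)/(γ − 2)) or θ < 1. Then there exist C > 0 and t₁ ≥ t₀ such that for all t ≥ t₁, ‖x'(t)‖ ≤ C · t^{−rγ/(γ − 2)}. -/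
open MeasureTheory
open scoped RealInnerProductSpace

/-!
Let `z` be the minimizer, `p = rγ / (γ - 2)` and `E` the Lyapunov energy of the solution, whose
kinetic part is half the squared norm of `w = x' + (lam / t) (x - z)`. Its derivative is computed
exactly: the gradient inequality, the growth of `F` and the size of the damping bound everything
but the forcing term, so that `u = t ^ (2p) E` satisfies `u' ≤ c (M - u) + t ^ (2p) ‖g‖ ‖w‖` with
`c ≥ 0`. Young's inequality with exponents `γ / 2` and `γ / (γ - 2)` absorbs any term
`t ^ (-(1 + θ)) ‖x - z‖ ^ 2` into `F x - F z` at the cost of `O(t ^ (-2p))`, which bounds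
`t ^ p ‖w‖` by a constant plus `u`; as `t ^ p ‖g‖` is integrable, Grönwall's inequality
bounds `u`, hence `t ^ p ‖x'‖`.

The growth and gradient hypotheses hold only near `z`. The same argument with small parameters,
using nothing but convexity, first gives `F (x t) → F z`, and growth turns this into `x t → z`.
-/

section Gronwall

open Set

theorem le_max_mul_exp_integral_of_deriv_le {u c w : ℝ → ℝ} {M T : ℝ}
    (hu : ∀ t ≥ T, DifferentiableAt ℝ u t) (hc : ∀ t ≥ T, 0 ≤ c t)
    (hw : Continuous w) (hw0 : ∀ t ≥ T, 0 ≤ w t) (hM : 0 ≤ M)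
    (hle : ∀ t ≥ T, deriv u t ≤ c t * (M - u t) + w t * u t) {t : ℝ} (ht : T ≤ t) :
    u t ≤ max (u T) M * Real.exp (∫ s in T..t, w s) := by
  set I : ℝ → ℝ := fun s ↦ ∫ τ in T..s, w τ
  set m := max (u T) M
  have hm : 0 ≤ m := hM.trans (le_max_right _ _)
  -- The term `ε * (t - T)` turns the exponential into a strict supersolution.
  have barrier : ∀ ε > 0, u t ≤ (m + ε * (t - T)) * Real.exp (I t) := by
    intro ε hε
    have hB : ∀ s, HasDerivAt (fun s ↦ (m + ε * (s - T)) * Real.exp (I s))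
        (ε * 1 * Real.exp (I s) + (m + ε * (s - T)) * (Real.exp (I s) * w s)) s := fun s ↦
      ((((hasDerivAt_id s).sub_const T).const_mul ε).const_add m).mul
        (hw.integral_hasStrictDerivAt T s).hasDerivAt.exp
    refine image_le_of_deriv_right_lt_deriv_boundary (a := T)
      (fun s hs ↦ (hu s hs.1).continuousAt.continuousWithinAt)
      (fun s hs ↦ (hu s hs.1).hasDerivAt.hasDerivWithinAt) ?_ hB (fun s hs heq ↦ ?_) ⟨ht, le_rfl⟩
    · simp [I, m]
    · have hI : 0 ≤ I s := intervalIntegral.integral_nonneg hs.1 fun τ hτ ↦ hw0 τ hτ.1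
      have hεs : 0 ≤ ε * (s - T) := mul_nonneg hε.le (sub_nonneg.2 hs.1)
      have hMu : M ≤ u s := calc
        M ≤ m + ε * (s - T) := (le_max_right _ _).trans (le_add_of_nonneg_right hεs)
        _ ≤ (m + ε * (s - T)) * Real.exp (I s) :=
          le_mul_of_one_le_right (add_nonneg hm hεs) (Real.one_le_exp hI)
        _ = u s := heq.symm
      calc deriv u s ≤ c s * (M - u s) + w s * u s := hle s hs.1
        _ ≤ w s * u s :=
          add_le_of_nonpos_left (mul_nonpos_of_nonneg_of_nonpos (hc s hs.1) (sub_nonpos.2 hMu))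
        _ = (m + ε * (s - T)) * (Real.exp (I s) * w s) := by rw [heq]; ring
        _ < _ := lt_add_of_pos_left _ (by positivity)
  refine ge_of_tendsto (x := nhdsWithin 0 (Ioi 0)) (f := fun ε : ℝ ↦
    (m + ε * (t - T)) * Real.exp (I t)) (Filter.Tendsto.mono_left ?_ nhdsWithin_le_nhds)
    (eventually_nhdsWithin_of_forall barrier)
  exact Continuous.tendsto' (by fun_prop) _ _ (by simp [I])

theorem exists_forall_le_of_deriv_le {u c w : ℝ → ℝ} {M T : ℝ}
    (hu : ∀ t ≥ T, DifferentiableAt ℝ u t) (hc : ∀ t ≥ T, 0 ≤ c t)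
    (hw : ContinuousOn w (Ici T)) (hw0 : ∀ t ≥ T, 0 ≤ w t) (hwi : IntegrableOn w (Ici T))
    (hM : 0 ≤ M) (hle : ∀ t ≥ T, deriv u t ≤ c t * (M - u t) + w t * u t) :
    ∃ B, ∀ t ≥ T, u t ≤ B := by
  -- The primitive of `w` is only one-sidedly differentiable at `T`, unlike that of `W`.
  set W : ℝ → ℝ := fun s ↦ w (max T s)
  have hW : Continuous W :=
    hw.comp_continuous (continuous_const.max continuous_id) fun s ↦ le_max_left T s
  have hWw : ∀ s ≥ T, W s = w s := fun s hs ↦ congrArg w (max_eq_right hs)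
  refine ⟨max (u T) M * Real.exp (∫ s in Ici T, w s), fun t ht ↦ ?_⟩
  have hint : ∫ s in T..t, W s ≤ ∫ s in Ici T, w s := by
    rw [intervalIntegral.integral_congr fun s hs ↦ hWw s (uIcc_of_le ht ▸ hs).1,
      intervalIntegral.integral_of_le ht]
    exact setIntegral_mono_set hwi (ae_restrict_of_forall_mem measurableSet_Ici hw0)
      (Ioc_subset_Ioi_self.trans Ioi_subset_Ici_self).eventuallyLE
  calc u t ≤ max (u T) M * Real.exp (∫ s in T..t, W s) :=
        le_max_mul_exp_integral_of_deriv_le hu hc hW (fun s hs ↦ hWw s hs ▸ hw0 s hs) hM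
          (fun s hs ↦ hWw s hs ▸ hle s hs) ht
    _ ≤ max (u T) M * Real.exp (∫ s in Ici T, w s) := by gcongr

end Gronwall

section Convex

open Filter Topology

variable {H : Type*} [NormedAddCommGroup H] [InnerProductSpace ℝ H]

theorem sub_le_inner_of_convexOn_of_hasGradientAt [CompleteSpace H] {s : Set H} {F : H → ℝ}
    {y z G : H} (hF : ConvexOn ℝ s F) (hz : z ∈ s) (hy : y ∈ s) (hG : HasGradientAt F G y) :
    F y - F z ≤ ⟪G, y - z⟫ := by
  have hG' : HasFDerivAt F (InnerProductSpace.toDual ℝ H G) (AffineMap.lineMap z y (1 : ℝ)) := by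
    simpa only [AffineMap.lineMap_apply_one] using hG.hasFDerivAt
  have hslope := (hF.comp_affineMap (AffineMap.lineMap z y)).slope_le_of_hasDerivAt
    (x := (0 : ℝ)) (y := 1) (by simpa using hz) (by simpa using hy) one_pos
    (hG'.comp_hasDerivAt (1 : ℝ) AffineMap.hasDerivAt_lineMap)
  simpa [slope_def_field] using hslope

theorem le_sub_of_convexOn_of_le_sub_sphere {E : Type*} [NormedAddCommGroup E] [NormedSpace ℝ E]
    {F : E → ℝ} {z y : E} {ρ m : ℝ} (hF : ConvexOn ℝ Set.univ F) (hρ : 0 < ρ) (hm : 0 ≤ m)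
    (hsphere : ∀ y, ‖y - z‖ = ρ → m ≤ F y - F z) (hy : ρ ≤ ‖y - z‖) : m ≤ F y - F z := by
  have hyz : 0 < ‖y - z‖ := hρ.trans_le hy
  set c := ρ / ‖y - z‖
  have hc : 0 < c := by positivity
  have hc1 : c ≤ 1 := (div_le_one hyz).2 hy
  have hradial : m ≤ c * (F y - F z) := by
    have hnorm : ‖(1 - c) • z + c • y - z‖ = ρ := by
      rw [show (1 - c) • z + c • y - z = c • (y - z) by module, norm_smul,
        Real.norm_of_nonneg hc.le, div_mul_cancel₀ _ hyz.ne']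
    have hconv := hF.2 (Set.mem_univ z) (Set.mem_univ y) (sub_nonneg.2 hc1) hc.le (by ring)
    simp only [smul_eq_mul] at hconv
    linarith [hsphere _ hnorm]
  exact hradial.trans (mul_le_of_le_one_left (nonneg_of_mul_nonneg_right (hm.trans hradial) hc) hc1)

theorem tendsto_of_tendsto_convexOn_of_growth {E ι : Type*} [NormedAddCommGroup E] [NormedSpace ℝ E]
    {F : E → ℝ} {z : E} {K γ : ℝ} {l : Filter ι} {x : ι → E}
    (hF : ConvexOn ℝ Set.univ F) (hK : 0 < K) (hgrowth : ∀ᶠ y in 𝓝 z, K * ‖y - z‖ ^ γ ≤ F y - F z)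
    (hx : Tendsto (fun i ↦ F (x i)) l (𝓝 (F z))) : Tendsto x l (𝓝 z) := by
  obtain ⟨ε, hε, hball⟩ := Metric.eventually_nhds_iff.1 hgrowth
  refine Metric.tendsto_nhds.2 fun δ hδ ↦ ?_
  obtain ⟨ρ, hρ, hρlt⟩ := exists_between (lt_min hε hδ)
  have hm : 0 < K * ρ ^ γ := by positivity
  have hsphere : ∀ y, ‖y - z‖ = ρ → K * ρ ^ γ ≤ F y - F z := fun y hy ↦
    hy ▸ hball (by rw [dist_eq_norm, hy]; exact hρlt.trans_le (min_le_left _ _))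
  filter_upwards [hx.eventually_lt_const (lt_add_of_pos_right (F z) hm)] with i hi
  rw [dist_eq_norm]
  refine lt_of_not_ge fun hge ↦ ?_
  have := le_sub_of_convexOn_of_le_sub_sphere hF hρ hm.le hsphere
    ((hρlt.trans_le (min_le_right _ _)).le.trans hge)
  linarith

end Convex

theorem exists_mul_le_mul_rpow_add_mul_rpow {p q ε : ℝ} (hpq : p.HolderConjugate q)
    (hε : 0 < ε) :
    ∃ C ≥ 0, ∀ a b : ℝ, 0 ≤ a → 0 ≤ b → a * b ≤ ε * a ^ p + C * b ^ q := by
  set c := ε ^ p⁻¹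
  have hc : 0 < c := Real.rpow_pos_of_pos hε _
  refine ⟨(c ^ q)⁻¹ / q, div_nonneg (by positivity) hpq.symm.nonneg, fun a b ha hb ↦ ?_⟩
  calc a * b = c * a * (b / c) := by field_simp
    _ ≤ (c * a) ^ p / p + (b / c) ^ q / q :=
      Real.young_inequality_of_nonneg (by positivity) (by positivity) hpq
    _ ≤ (c * a) ^ p + (b / c) ^ q / q := by
      gcongr
      exact div_le_self (by positivity) hpq.lt.le
    _ = ε * a ^ p + (c ^ q)⁻¹ / q * b ^ q := by
      rw [Real.mul_rpow hc.le ha, Real.rpow_inv_rpow hε.le hpq.ne_zero, Real.div_rpow hb hc.le]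
      ring

theorem exists_mul_rpow_mul_sq_le {K γ θ D : ℝ} (hK : 0 < K) (hγ : 2 < γ) (hD : 0 ≤ D) :
    ∃ C ≥ 0, ∀ t d f : ℝ, 0 < t → 0 ≤ d → K * d ^ γ ≤ f →
      D * t ^ (-(1 + θ)) * d ^ 2 ≤ f + C * t ^ (-(2 * ((1 + θ) / 2 * γ / (γ - 2)))) := by
  have hγ2 : 0 < γ - 2 := by linarith
  have hpq : (γ / 2).HolderConjugate (γ / (γ - 2)) :=
    Real.holderConjugate_iff.2 ⟨by linarith, by field_simp [hγ2.ne']; ring⟩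
  obtain ⟨C, hC, hyoung⟩ := exists_mul_le_mul_rpow_add_mul_rpow hpq hK
  refine ⟨C * D ^ (γ / (γ - 2)), by positivity, fun t d f ht hd hf ↦ ?_⟩
  calc D * t ^ (-(1 + θ)) * d ^ 2 = d ^ 2 * (D * t ^ (-(1 + θ))) := mul_comm _ _
    _ ≤ K * (d ^ 2) ^ (γ / 2) + C * (D * t ^ (-(1 + θ))) ^ (γ / (γ - 2)) :=
      hyoung _ _ (by positivity) (by positivity)
    _ = K * d ^ γ + C * D ^ (γ / (γ - 2)) * t ^ (-(2 * ((1 + θ) / 2 * γ / (γ - 2)))) := by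
      rw [← Real.rpow_natCast_mul hd, Real.mul_rpow hD (by positivity), ← Real.rpow_mul ht.le,
        ← mul_assoc, show ((2 : ℕ) : ℝ) * (γ / 2) = γ by push_cast; ring]
      congr 3
      ring
    _ ≤ _ := by gcongr

theorem abs_mul_rpow_add_mul_rpow_neg_two_le {θ t : ℝ} (hθ : θ ≤ 1) (ht : 1 ≤ t) (a b : ℝ) :
    |a * t ^ (-(1 + θ)) + b * t ^ (-2 : ℝ)| ≤ (|a| + |b|) * t ^ (-(1 + θ)) := by
  have hle : t ^ (-2 : ℝ) ≤ t ^ (-(1 + θ)) := Real.rpow_le_rpow_of_exponent_le ht (by linarith)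
  calc _ ≤ |a| * t ^ (-(1 + θ)) + |b| * t ^ (-2 : ℝ) := by
        refine (abs_add_le _ _).trans_eq ?_
        rw [abs_mul, abs_mul, abs_of_pos (a := t ^ (-(1 + θ))) (by positivity),
          abs_of_pos (a := t ^ (-2 : ℝ)) (by positivity)]
    _ ≤ |a| * t ^ (-(1 + θ)) + |b| * t ^ (-(1 + θ)) := by gcongr
    _ = _ := by ring

theorem hasDerivAt_rpow_mul {E : ℝ → ℝ} {E' k t : ℝ} (hE : HasDerivAt E E' t) (ht : 0 < t) :
    HasDerivAt (fun s ↦ s ^ k * E s) (t ^ k * (E' + k / t * E t)) t := by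
  refine ((Real.hasDerivAt_rpow_const (Or.inl ht.ne')).mul hE).congr_deriv ?_
  rw [Real.rpow_sub_one ht.ne']
  ring

theorem continuousOn_rpow_mul {f : ℝ → ℝ} {k T : ℝ} (hT : 0 < T)
    (hf : ContinuousOn f (Set.Ici T)) : ContinuousOn (fun t ↦ t ^ k * f t) (Set.Ici T) :=
  .mul (fun _ ht ↦ (Real.continuousAt_rpow_const _ _
    (Or.inl (hT.trans_le ht).ne')).continuousWithinAt) hf

theorem integrableOn_rpow_mul_norm_of_le {E : Type*} [NormedAddCommGroup E] {g : ℝ → E}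
    {k p T : ℝ} (hT : 1 ≤ T) (hkp : k ≤ p) (hg : ContinuousOn g (Set.Ici T))
    (hint : IntegrableOn (fun t ↦ t ^ p * ‖g t‖) (Set.Ici T)) :
    IntegrableOn (fun t ↦ t ^ k * ‖g t‖) (Set.Ici T) := by
  have hT0 : 0 < T := one_pos.trans_le hT
  refine Integrable.mono' hint
    ((continuousOn_rpow_mul hT0 hg.norm).aestronglyMeasurable measurableSet_Ici)
    (ae_restrict_of_forall_mem measurableSet_Ici fun t ht ↦ ?_)
  have : 0 < t := hT0.trans_le ht
  rw [Real.norm_of_nonneg (by positivity)]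
  gcongr
  exact hT.trans ht

theorem rpow_mul_rpow_neg {t : ℝ} (ht : 0 < t) (k : ℝ) : t ^ k * t ^ (-k) = 1 := by
  rw [← Real.rpow_add ht, add_neg_cancel, Real.rpow_zero]

theorem rpow_two_mul {t : ℝ} (ht : 0 ≤ t) (p : ℝ) : t ^ (2 * p) = (t ^ p) ^ 2 := by
  rw [mul_comm, Real.rpow_mul ht, Real.rpow_two]

section Lyapunov

open Filter Topology

variable {H : Type*} [NormedAddCommGroup H] [InnerProductSpace ℝ H]

/-- The velocity corrected by a multiple of `(x - z) / t`; its square is the kinetic part of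
the Lyapunov energy. -/
noncomputable def modifiedVelocity (z : H) (lam t : ℝ) (x v : H) : H :=
  v + (lam / t) • (x - z)

/-- The coefficient of `‖x - z‖ ^ 2 / 2` in the Lyapunov energy, for which the terms in
`⟪v, x - z⟫` of `hasDerivAt_lyapunov` cancel. It may be negative. -/
noncomputable def lyapunovCoeff (α θ lam q t : ℝ) : ℝ :=
  α * lam * t ^ (-(1 + θ)) + lam * (1 - q - lam) * t ^ (-2 : ℝ)

/-- The Lyapunov energy at time `t`, position `x` and velocity `v`, relative to a minimizer `z`;
`lam` and `q` are free parameters. -/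
noncomputable def lyapunov (F : H → ℝ) (z : H) (α θ lam q t : ℝ) (x v : H) : ℝ :=
  F x - F z + ‖modifiedVelocity z lam t x v‖ ^ 2 / 2 + lyapunovCoeff α θ lam q t / 2 * ‖x - z‖ ^ 2

/-- Twice the coefficient of `‖x - z‖ ^ 2` in the rate of change of the Lyapunov energy. -/
noncomputable def lyapunovRemainder (α θ lam q t : ℝ) : ℝ :=
  (α * lam * (q - 1 - θ) * t ^ (-(1 + θ)) + lam * (1 - q) * (q - 2) * t ^ (-2 : ℝ)) / t

theorem hasDerivAt_lyapunovCoeff {α θ lam q t : ℝ} (ht : 0 < t) :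
    HasDerivAt (lyapunovCoeff α θ lam q)
      (-(α * lam * (1 + θ) * t ^ (-(1 + θ)) + 2 * lam * (1 - q - lam) * t ^ (-2 : ℝ)) / t) t := by
  refine (((Real.hasDerivAt_rpow_const (Or.inl ht.ne')).const_mul (α * lam)).add
    ((Real.hasDerivAt_rpow_const (Or.inl ht.ne')).const_mul (lam * (1 - q - lam)))).congr_deriv ?_
  rw [Real.rpow_sub_one ht.ne', Real.rpow_sub_one ht.ne']
  ring

theorem lyapunovCoeff_nonneg {α θ lam q t : ℝ} (hα : 0 ≤ α) (hlam : 0 ≤ lam) (hq : q + lam ≤ 1)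
    (ht : 0 ≤ t) : 0 ≤ lyapunovCoeff α θ lam q t := by
  have : 0 ≤ 1 - q - lam := by linarith
  unfold lyapunovCoeff
  positivity

theorem exists_sq_add_sq_le_lyapunov_add {K γ θ : ℝ} (hK : 0 < K) (hγ : 2 < γ) (hθ : θ ≤ 1)
    (F : H → ℝ) (z : H) (α lam q : ℝ) :
    ∃ C ≥ 0, ∀ t ≥ 1, ∀ x v, K * ‖x - z‖ ^ γ ≤ F x - F z →
      ‖modifiedVelocity z lam t x v‖ ^ 2 / 2 + (lam / t * ‖x - z‖) ^ 2 ≤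
        lyapunov F z α θ lam q t x v + C * t ^ (-(2 * ((1 + θ) / 2 * γ / (γ - 2)))) := by
  set a := α * lam
  set b := lam * (1 - q - lam) - 2 * lam ^ 2
  obtain ⟨C, hC, hyoung⟩ := exists_mul_rpow_mul_sq_le (θ := θ) hK hγ
    (show 0 ≤ |a| + |b| by positivity)
  refine ⟨C, hC, fun t ht x v hx ↦ ?_⟩
  have habsorb := hyoung t ‖x - z‖ _ (by linarith) (norm_nonneg _) hx
  have hnonneg : 0 ≤ (|a| + |b|) * t ^ (-(1 + θ)) * ‖x - z‖ ^ 2 := by positivity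
  have hcoeff := mul_le_mul_of_nonneg_right
    (abs_le.1 (abs_mul_rpow_add_mul_rpow_neg_two_le hθ ht a b)).1 (sq_nonneg ‖x - z‖)
  have hsq : (lam / t * ‖x - z‖) ^ 2 = lam ^ 2 * t ^ (-2 : ℝ) * ‖x - z‖ ^ 2 := by
    rw [Real.rpow_neg (by linarith), Real.rpow_two]
    ring
  unfold lyapunov lyapunovCoeff
  linarith

theorem sq_norm_velocity_le (z : H) (lam t : ℝ) (x v : H) :
    ‖v‖ ^ 2 ≤ 4 * (‖modifiedVelocity z lam t x v‖ ^ 2 / 2 + (lam / t * ‖x - z‖) ^ 2) := by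
  have hnorm : ‖v‖ ≤ ‖modifiedVelocity z lam t x v‖ + ‖(lam / t) • (x - z)‖ := calc
    ‖v‖ = ‖modifiedVelocity z lam t x v - (lam / t) • (x - z)‖ := by
      rw [modifiedVelocity, add_sub_cancel_right]
    _ ≤ _ := norm_sub_le _ _
  have hsq : (lam / t * ‖x - z‖) ^ 2 = ‖(lam / t) • (x - z)‖ ^ 2 := by
    rw [norm_smul, mul_pow, mul_pow, Real.norm_eq_abs, sq_abs]
  rw [hsq]
  linarith [pow_le_pow_left₀ (norm_nonneg v) hnorm 2,
    add_sq_le (a := ‖modifiedVelocity z lam t x v‖) (b := ‖(lam / t) • (x - z)‖),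
    sq_nonneg ‖(lam / t) • (x - z)‖]

/-- Parameters for which `t ^ (2 * p)` times the Lyapunov energy satisfies a Grönwall inequality
along solutions on `[T, ∞)`, where `f` and `d` stand for `F x - F z` and `‖x - z‖`. -/
structure IsAdmissible (α θ γ K p lam q M T : ℝ) : Prop where
  lam_nonneg : 0 ≤ lam
  M_nonneg : 0 ≤ M
  two_mul_le : 2 * p ≤ q
  damping_le : ∀ t ≥ T, (lam + q / 2) / t ≤ α / t ^ θ
  remainder_le : ∀ t ≥ T, ∀ d f : ℝ, 0 ≤ d → K * d ^ γ ≤ f →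
    (q - lam * γ) / t * f + lyapunovRemainder α θ lam q t / 2 * d ^ 2
      ≤ (q - 2 * p) / t * (M * t ^ (-(2 * p)))

theorem isAdmissible_of_le_half {α θ q T : ℝ} (hα : 0 ≤ α) (hθ : θ ≤ 1) (hT : 1 ≤ T) (hq : 0 ≤ q)
    (hq_half : q ≤ 1 / 2) (hqθ : q ≤ 1 + θ) (hqα : 3 / 2 * q ≤ α) :
    IsAdmissible α θ 1 0 (q / 2) q q 0 T where
  lam_nonneg := hq
  M_nonneg := le_rfl
  two_mul_le := by linarith
  damping_le t ht := by
    have ht1 : 1 ≤ t := hT.trans ht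
    have htθ : t ^ θ ≤ t := Real.rpow_le_self_of_one_le ht1 hθ
    gcongr
    linarith
  remainder_le t ht d f _ _ := by
    have ht1 : 1 ≤ t := hT.trans ht
    have hR : lyapunovRemainder α θ q q t ≤ 0 := by
      refine div_nonpos_of_nonpos_of_nonneg (add_nonpos ?_ ?_) (by positivity)
      · exact mul_nonpos_of_nonpos_of_nonneg
          (mul_nonpos_of_nonneg_of_nonpos (by positivity) (by linarith)) (by positivity)
      · exact mul_nonpos_of_nonpos_of_nonneg
          (mul_nonpos_of_nonneg_of_nonpos (mul_nonneg hq (by linarith)) (by linarith))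
          (by positivity)
    simpa using mul_nonpos_of_nonpos_of_nonneg
      (div_nonpos_of_nonpos_of_nonneg hR two_pos.le) (sq_nonneg d)

theorem isAdmissible_one_of_le {α γ K T : ℝ} (hγ : 2 < γ) (hαγ : (γ + 2) / (γ - 2) ≤ α)
    (hT : 0 < T) :
    IsAdmissible α 1 γ K ((1 + 1) / 2 * γ / (γ - 2)) ((α + 1) / γ) (α + 1) 0 T := by
  have hγ2 : 0 < γ - 2 := by linarith
  have hγ0 : 0 < γ := by linarith
  have hα : 0 ≤ α := hαγ.trans' (by positivity)
  rw [div_le_iff₀ hγ2] at hαγ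
  refine ⟨by positivity, le_rfl, ?_, fun t ht ↦ ?_, fun t _ d f _ _ ↦ le_of_eq ?_⟩
  · rw [mul_div_assoc', div_le_iff₀ hγ2]
    linarith
  · have : 0 < t := hT.trans_le ht
    rw [Real.rpow_one]
    gcongr
    rw [div_add_div _ _ hγ0.ne' two_ne_zero, div_le_iff₀ (by positivity)]
    linarith
  · unfold lyapunovRemainder
    rw [div_mul_cancel₀ _ hγ0.ne', show -(1 + 1 : ℝ) = -2 by norm_num]
    ring

theorem exists_isAdmissible_of_lt_one {α θ γ K p : ℝ} (hα : 0 < α) (hθ : -1 < θ) (hθ1 : θ < 1)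
    (hγ : 2 < γ) (hK : 0 < K) (hp : p = (1 + θ) / 2 * γ / (γ - 2)) :
    ∃ lam q M T₀, ∀ T ≥ T₀, IsAdmissible α θ γ K p lam q M T := by
  have hp0 : 0 < p := hp ▸ div_pos (mul_pos (by linarith) (by linarith)) (by linarith)
  set q := 2 * p + 1
  set lam := (q + 1) / γ
  have hlam : lam * γ = q + 1 := div_mul_cancel₀ _ (by linarith)
  set a := α * lam * (q - 1 - θ)
  set b := lam * (1 - q) * (q - 2)
  obtain ⟨M, hM, hyoung⟩ := exists_mul_rpow_mul_sq_le (θ := θ) hK hγ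
    (show 0 ≤ |a| + |b| by positivity)
  rw [← hp] at hyoung
  obtain ⟨N, hN⟩ := eventually_atTop.1
    ((tendsto_rpow_atTop (sub_pos.2 hθ1)).eventually_ge_atTop ((lam + q / 2) / α))
  refine ⟨lam, q, M, max N 1, fun T hT ↦ ⟨by positivity, hM, by linarith, fun t ht ↦ ?_,
    fun t ht d f hd hf ↦ ?_⟩⟩
  · have ht0 : 0 < t := one_pos.trans_le ((le_max_right _ _).trans (hT.trans ht))
    have hlarge := hN t ((le_max_left _ _).trans (hT.trans ht))
    rw [div_le_iff₀ hα, Real.rpow_sub ht0, Real.rpow_one, div_mul_comm] at hlarge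
    rwa [div_le_iff₀ ht0]
  · have ht1 : 1 ≤ t := (le_max_right _ _).trans (hT.trans ht)
    have hcoeff : (a * t ^ (-(1 + θ)) + b * t ^ (-2 : ℝ)) / 2 * d ^ 2 ≤
        (|a| + |b|) * t ^ (-(1 + θ)) * d ^ 2 := by
      refine mul_le_mul_of_nonneg_right ?_ (sq_nonneg d)
      linarith [abs_mul_rpow_add_mul_rpow_neg_two_le hθ1.le ht1 a b,
        le_abs_self (a * t ^ (-(1 + θ)) + b * t ^ (-2 : ℝ)),
        abs_nonneg (a * t ^ (-(1 + θ)) + b * t ^ (-2 : ℝ))]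
    calc _ = 1 / t * (-f + (a * t ^ (-(1 + θ)) + b * t ^ (-2 : ℝ)) / 2 * d ^ 2) := by
          rw [hlam]; unfold lyapunovRemainder; ring
      _ ≤ 1 / t * (M * t ^ (-(2 * p))) := by
          gcongr
          linarith [hyoung t d f (by linarith) hd hf]
      _ = _ := by rw [show q - 2 * p = 1 by ring]

theorem exists_isAdmissible {α θ γ K p : ℝ} (hα : 0 < α) (hθ : -1 < θ) (hγ : 2 < γ) (hK : 0 < K)
    (hp : p = (1 + θ) / 2 * γ / (γ - 2)) (hcase : (θ = 1 ∧ (γ + 2) / (γ - 2) ≤ α) ∨ θ < 1) :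
    ∃ lam q M T₀, ∀ T ≥ T₀, IsAdmissible α θ γ K p lam q M T := by
  obtain ⟨rfl, hαγ⟩ | hθ1 := hcase
  · exact ⟨_, _, _, 1, fun T hT ↦ hp ▸ isAdmissible_one_of_le hγ hαγ (one_pos.trans_le hT)⟩
  · exact exists_isAdmissible_of_lt_one hα hθ hθ1 hγ hK hp

variable [CompleteSpace H]

theorem hasDerivAt_comp_of_hasGradientAt {F : H → ℝ} {G x' : H} {x : ℝ → H} {t : ℝ}
    (hF : HasGradientAt F G (x t)) (hx : HasDerivAt x x' t) :
    HasDerivAt (fun s ↦ F (x s)) ⟪G, x'⟫ t :=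
  (hF.hasFDerivAt.comp_hasDerivAt t hx).congr_deriv InnerProductSpace.toDual_apply_apply

/-- The curve `x` with velocity `v` solves `x'' + (α / t ^ θ) x' + ∇F(x) = g` on `[T, ∞)`,
written as a first-order system. -/
structure IsInertialSolution (F : H → ℝ) (α θ : ℝ) (g x v : ℝ → H) (T : ℝ) : Prop where
  hasDerivAt_position : ∀ t ≥ T, HasDerivAt x (v t) t
  hasDerivAt_velocity : ∀ t ≥ T,
    HasDerivAt v (g t - (α / t ^ θ) • v t - gradient F (x t)) t

namespace IsInertialSolution

variable {F : H → ℝ} {z : H} {α θ γ K p lam q M C T : ℝ} {g x v : ℝ → H}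

theorem mono {S : ℝ} (hsol : IsInertialSolution F α θ g x v T) (hTS : T ≤ S) :
    IsInertialSolution F α θ g x v S where
  hasDerivAt_position t ht := hsol.hasDerivAt_position t (hTS.trans ht)
  hasDerivAt_velocity t ht := hsol.hasDerivAt_velocity t (hTS.trans ht)

theorem hasDerivAt_modifiedVelocity (hsol : IsInertialSolution F α θ g x v T) {lam t : ℝ}
    (ht : 0 < t) (hTt : T ≤ t) :
    HasDerivAt (fun s ↦ modifiedVelocity z lam s (x s) (v s))
      (g t - gradient F (x t) - (α / t ^ θ - lam / t) • v t - (lam / t ^ 2) • (x t - z)) t := by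
  refine ((hsol.hasDerivAt_velocity t hTt).add (((hasDerivAt_inv ht.ne').const_mul lam).smul
    ((hsol.hasDerivAt_position t hTt).sub_const z))).congr_deriv ?_
  rw [← div_eq_mul_inv, mul_neg, ← div_eq_mul_inv]
  module

theorem hasDerivAt_lyapunov (hsol : IsInertialSolution F α θ g x v T) {lam q t : ℝ}
    (hF : DifferentiableAt ℝ F (x t)) (ht : 0 < t) (hTt : T ≤ t) :
    HasDerivAt (fun s ↦ lyapunov F z α θ lam q s (x s) (v s))
      (⟪g t, modifiedVelocity z lam t (x t) (v t)⟫ - lam / t * ⟪gradient F (x t), x t - z⟫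
        + q / t * (F (x t) - F z) - (α / t ^ θ - (lam + q / 2) / t) * ‖v t‖ ^ 2
        + lyapunovRemainder α θ lam q t / 2 * ‖x t - z‖ ^ 2
        - q / t * lyapunov F z α θ lam q t (x t) (v t)) t := by
  have hx := hsol.hasDerivAt_position t hTt
  refine (((hasDerivAt_comp_of_hasGradientAt hF.hasGradientAt hx).sub_const (F z)).add
    ((hsol.hasDerivAt_modifiedVelocity ht hTt).norm_sq.div_const 2)).add
    (((hasDerivAt_lyapunovCoeff ht).div_const 2).mul (hx.sub_const z).norm_sq) |>.congr_deriv ?_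
  have hdamping : α / t ^ θ = α * t * t ^ (-(1 + θ)) := by
    rw [neg_add, Real.rpow_add ht, Real.rpow_neg_one, Real.rpow_neg ht.le]
    field_simp
  have hsq : t ^ (-2 : ℝ) = 1 / t ^ 2 := by
    rw [Real.rpow_neg ht.le, Real.rpow_two, one_div]
  simp only [lyapunov, lyapunovCoeff, lyapunovRemainder, modifiedVelocity, hdamping, hsq,
    ← real_inner_self_eq_norm_sq, inner_add_left, inner_add_right, inner_sub_right,
    inner_sub_left, inner_smul_left, inner_smul_right, RCLike.conj_to_real, real_inner_comm]
  generalize t ^ (-(1 + θ)) = A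
  field_simp
  ring

theorem deriv_rpow_mul_lyapunov_le (hsol : IsInertialSolution F α θ g x v T)
    (hpar : IsAdmissible α θ γ K p lam q M T) {t : ℝ} (ht : 0 < t) (hTt : T ≤ t)
    (hF : DifferentiableAt ℝ F (x t)) (hK : K * ‖x t - z‖ ^ γ ≤ F (x t) - F z)
    (hγ : γ * (F (x t) - F z) ≤ ⟪gradient F (x t), x t - z⟫) :
    deriv (fun s ↦ s ^ (2 * p) * lyapunov F z α θ lam q s (x s) (v s)) t ≤
      (q - 2 * p) / t * (M - t ^ (2 * p) * lyapunov F z α θ lam q t (x t) (v t))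
        + t ^ (2 * p) * (‖g t‖ * ‖modifiedVelocity z lam t (x t) (v t)‖) := by
  rw [(hasDerivAt_rpow_mul (hsol.hasDerivAt_lyapunov hF ht hTt) ht).deriv]
  set E := lyapunov F z α θ lam q t (x t) (v t)
  set w := modifiedVelocity z lam t (x t) (v t)
  have hforcing : ⟪g t, w⟫ ≤ ‖g t‖ * ‖w‖ := real_inner_le_norm _ _
  have hgradient : lam / t * (γ * (F (x t) - F z)) ≤ lam / t * ⟪gradient F (x t), x t - z⟫ :=
    mul_le_mul_of_nonneg_left hγ (div_nonneg hpar.lam_nonneg ht.le)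
  have hdamping : 0 ≤ (α / t ^ θ - (lam + q / 2) / t) * ‖v t‖ ^ 2 :=
    mul_nonneg (sub_nonneg.2 (hpar.damping_le t hTt)) (sq_nonneg _)
  have hremainder := hpar.remainder_le t hTt _ _ (norm_nonneg _) hK
  calc _ ≤ t ^ (2 * p) *
        (‖g t‖ * ‖w‖ + (q - 2 * p) / t * (M * t ^ (-(2 * p))) - (q - 2 * p) / t * E) := by
        refine mul_le_mul_of_nonneg_left ?_ (Real.rpow_nonneg ht.le _)
        linear_combination hforcing + hgradient + hdamping + hremainder
    _ = _ := by linear_combination (q - 2 * p) / t * M * rpow_mul_rpow_neg ht (2 * p)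

theorem exists_rpow_mul_lyapunov_le (hsol : IsInertialSolution F α θ g x v T)
    (hpar : IsAdmissible α θ γ K p lam q M T) (hT : 0 < T) (hC : 0 ≤ C)
    (hF : Differentiable ℝ F) (hg : ContinuousOn g (Set.Ici T))
    (hint : IntegrableOn (fun t ↦ t ^ p * ‖g t‖) (Set.Ici T))
    (hK : ∀ t ≥ T, K * ‖x t - z‖ ^ γ ≤ F (x t) - F z)
    (hγ : ∀ t ≥ T, γ * (F (x t) - F z) ≤ ⟪gradient F (x t), x t - z⟫)
    (hlower : ∀ t ≥ T, ‖modifiedVelocity z lam t (x t) (v t)‖ ^ 2 / 2 ≤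
      lyapunov F z α θ lam q t (x t) (v t) + C * t ^ (-(2 * p))) :
    ∃ B, ∀ t ≥ T, t ^ (2 * p) * lyapunov F z α θ lam q t (x t) (v t) ≤ B := by
  set E : ℝ → ℝ := fun t ↦ lyapunov F z α θ lam q t (x t) (v t)
  set w : ℝ → H := fun t ↦ modifiedVelocity z lam t (x t) (v t)
  have hpos : ∀ t ≥ T, 0 < t := fun t ht ↦ hT.trans_le ht
  have hderiv : ∀ t ≥ T, HasDerivAt (fun s ↦ s ^ (2 * p) * E s) _ t := fun t ht ↦
    hasDerivAt_rpow_mul (hsol.hasDerivAt_lyapunov hF.differentiableAt (hpos t ht) ht) (hpos t ht)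
  have hw : ∀ t ≥ T, t ^ p * ‖w t‖ ≤ t ^ (2 * p) * E t + (C + 1) := fun t ht ↦ by
    have := hpos t ht
    calc t ^ p * ‖w t‖ ≤ (t ^ p * ‖w t‖) ^ 2 / 2 + 1 := by
          linarith [two_mul_le_add_sq (t ^ p * ‖w t‖) 1]
      _ = t ^ (2 * p) * (‖w t‖ ^ 2 / 2) + 1 := by rw [rpow_two_mul this.le]; ring
      _ ≤ t ^ (2 * p) * (E t + C * t ^ (-(2 * p))) + 1 := by gcongr; exact hlower t ht
      _ = _ := by linear_combination C * rpow_mul_rpow_neg this (2 * p)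
  suffices hbound : ∃ B, ∀ t ≥ T, t ^ (2 * p) * E t + (C + 1) ≤ B from
    hbound.imp fun B hB t ht ↦ by linarith [hB t ht]
  refine exists_forall_le_of_deriv_le (c := fun t ↦ (q - 2 * p) / t)
    (w := fun t ↦ t ^ p * ‖g t‖) (M := M + (C + 1))
    (fun t ht ↦ (hderiv t ht).differentiableAt.add_const _)
    (fun t ht ↦ div_nonneg (sub_nonneg.2 hpar.two_mul_le) (hpos t ht).le)
    (continuousOn_rpow_mul hT hg.norm)
    (fun t ht ↦ by have := hpos t ht; positivity) hint
    (by linarith [hpar.M_nonneg]) fun t ht ↦ ?_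
  have hforcing : t ^ (2 * p) * (‖g t‖ * ‖w t‖) ≤
      t ^ p * ‖g t‖ * (t ^ (2 * p) * E t + (C + 1)) := calc
    _ = t ^ p * ‖g t‖ * (t ^ p * ‖w t‖) := by rw [rpow_two_mul (hpos t ht).le]; ring
    _ ≤ _ := mul_le_mul_of_nonneg_left (hw t ht)
      (mul_nonneg (Real.rpow_nonneg (hpos t ht).le _) (norm_nonneg _))
  rw [deriv_add_const]
  linarith [hsol.deriv_rpow_mul_lyapunov_le hpar (hpos t ht) ht hF.differentiableAt
    (hK t ht) (hγ t ht)]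

theorem tendsto_value (hsol : IsInertialSolution F α θ g x v T) (hα : 0 < α)
    (hθ : -1 < θ) (hθ1 : θ ≤ 1) (hp : 0 < p) (hT : 1 ≤ T)
    (hconv : ConvexOn ℝ Set.univ F) (hF : Differentiable ℝ F)
    (hz : ∀ y, F z ≤ F y) (hg : ContinuousOn g (Set.Ici T))
    (hint : IntegrableOn (fun t ↦ t ^ p * ‖g t‖) (Set.Ici T)) :
    Tendsto (fun t ↦ F (x t)) atTop (𝓝 (F z)) := by
  obtain ⟨q, hq, hqle⟩ : ∃ q > 0, q ≤ min (min (1 / 2) (1 + θ)) (min (2 * p) (2 / 3 * α)) :=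
    ⟨_, by simp only [gt_iff_lt, lt_min_iff]; refine ⟨⟨?_, ?_⟩, ?_, ?_⟩ <;> linarith, le_rfl⟩
  obtain ⟨⟨hq_half, hqθ⟩, hqp, hqα⟩ := by simpa only [le_min_iff] using hqle
  have hpar : IsAdmissible α θ 1 0 (q / 2) q q 0 T :=
    isAdmissible_of_le_half hα.le hθ1 hT hq.le hq_half hqθ (by linarith)
  have hpos : ∀ t ≥ T, 0 < t := fun t ht ↦ one_pos.trans_le (hT.trans ht)
  have henergy : ∀ t ≥ T, F (x t) - F z + ‖modifiedVelocity z q t (x t) (v t)‖ ^ 2 / 2 ≤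
      lyapunov F z α θ q q t (x t) (v t) := fun t ht ↦ by
    have := lyapunovCoeff_nonneg (θ := θ) hα.le hq.le (show q + q ≤ 1 by linarith) (hpos t ht).le
    exact le_add_of_nonneg_right (by positivity)
  obtain ⟨B, hB⟩ := hsol.exists_rpow_mul_lyapunov_le hpar (one_pos.trans_le hT) le_rfl hF hg
    (integrableOn_rpow_mul_norm_of_le hT (by linarith) hg hint)
    (fun t _ ↦ by simpa using hz (x t))
    (fun t _ ↦ by
      simpa using sub_le_inner_of_convexOn_of_hasGradientAt hconv (Set.mem_univ z)
        (Set.mem_univ (x t)) (hF (x t)).hasGradientAt)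
    (fun t ht ↦ by linarith [henergy t ht, hz (x t)])
  have hvalue : ∀ t ≥ T, F (x t) ≤ F z + B * t ^ (-q) := fun t ht ↦ by
    have hB := mul_le_mul_of_nonneg_right (hB t ht) (Real.rpow_nonneg (hpos t ht).le (-q))
    rw [mul_div_cancel₀ q two_ne_zero, mul_right_comm, rpow_mul_rpow_neg (hpos t ht), one_mul] at hB
    linarith [henergy t ht, sq_nonneg ‖modifiedVelocity z q t (x t) (v t)‖]
  refine tendsto_of_tendsto_of_tendsto_of_le_of_le' tendsto_const_nhds ?_
    (.of_forall fun t ↦ hz (x t)) (eventually_atTop.2 ⟨T, hvalue⟩)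
  simpa using ((tendsto_rpow_neg_atTop hq).const_mul B).const_add (F z)

theorem exists_norm_velocity_le (hsol : IsInertialSolution F α θ g x v T)
    (hpar : IsAdmissible α θ γ K p lam q M T) (hp : p = (1 + θ) / 2 * γ / (γ - 2))
    (hθ : θ ≤ 1) (hγ2 : 2 < γ) (hK0 : 0 < K) (hT : 1 ≤ T)
    (hF : Differentiable ℝ F) (hg : ContinuousOn g (Set.Ici T))
    (hint : IntegrableOn (fun t ↦ t ^ p * ‖g t‖) (Set.Ici T))
    (hK : ∀ t ≥ T, K * ‖x t - z‖ ^ γ ≤ F (x t) - F z)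
    (hγ : ∀ t ≥ T, γ * (F (x t) - F z) ≤ ⟪gradient F (x t), x t - z⟫) :
    ∃ B > 0, ∀ t ≥ T, ‖v t‖ ≤ B * t ^ (-p) := by
  obtain ⟨C, hC, hlower⟩ := exists_sq_add_sq_le_lyapunov_add hK0 hγ2 hθ F z α lam q
  rw [← hp] at hlower
  have hlower_sol := fun t ht ↦ hlower t (hT.trans ht) (x t) (v t) (hK t ht)
  obtain ⟨B, hB⟩ := hsol.exists_rpow_mul_lyapunov_le hpar (one_pos.trans_le hT) hC hF hg hint hK hγ
    fun t ht ↦ (le_add_of_nonneg_right (sq_nonneg _)).trans (hlower_sol t ht)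
  refine ⟨√(4 * (B + C)) + 1, by positivity, fun t ht ↦ ?_⟩
  have ht0 : 0 < t := one_pos.trans_le (hT.trans ht)
  have hsq : (t ^ p * ‖v t‖) ^ 2 ≤ 4 * (B + C) := calc
    (t ^ p * ‖v t‖) ^ 2 = t ^ (2 * p) * ‖v t‖ ^ 2 := by rw [mul_pow, rpow_two_mul ht0.le]
    _ ≤ t ^ (2 * p) * (4 * (lyapunov F z α θ lam q t (x t) (v t) + C * t ^ (-(2 * p)))) := by
      gcongr
      linarith [sq_norm_velocity_le z lam t (x t) (v t), hlower_sol t ht]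
    _ = 4 * (t ^ (2 * p) * lyapunov F z α θ lam q t (x t) (v t) + C) := by
      linear_combination 4 * C * rpow_mul_rpow_neg ht0 (2 * p)
    _ ≤ 4 * (B + C) := by gcongr; exact hB t ht
  rw [Real.rpow_neg ht0.le, ← div_eq_mul_inv, le_div_iff₀ (by positivity), mul_comm]
  exact (Real.le_sqrt_of_sq_le hsq).trans (le_add_of_nonneg_right zero_le_one)

end IsInertialSolution

theorem stmt_10_general {F : H → ℝ} {z : H} {α t₀ θ γ r : ℝ} {g x v : ℝ → H}
    (hz : ∀ y, F z ≤ F y) (hconv : ConvexOn ℝ Set.univ F) (hF : Differentiable ℝ F)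
    (hα : 0 < α) (hθ : -1 < θ) (hθ1 : θ ≤ 1) (hγ : 2 < γ) (hr : r = (1 + θ) / 2)
    (hsol : IsInertialSolution F α θ g x v t₀) (hg : ContinuousOn g (Set.Ici t₀))
    (hH1 : ∃ η > 0, ∀ y, ‖y - z‖ < η → F y - F z ≤ 1 / γ * ⟪gradient F y, y - z⟫)
    (hH2 : ∃ K > 0, ∃ ε > 0, ∀ y, ‖y - z‖ < ε → K * ‖y - z‖ ^ γ ≤ F y - F z)
    (hint : IntegrableOn (fun t ↦ t ^ (r * γ / (γ - 2)) * ‖g t‖) (Set.Ici t₀))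
    (hcase : (θ = 1 ∧ (γ + 2) / (γ - 2) ≤ α) ∨ θ < 1) :
    ∃ C > 0, ∃ t₁ ≥ t₀, ∀ t ≥ t₁, ‖v t‖ ≤ C * t ^ (-(r * γ / (γ - 2))) := by
  subst hr
  simp only [← dist_eq_norm, ← Metric.eventually_nhds_iff] at hH1 hH2
  obtain ⟨K, hK, hH2⟩ := hH2
  simp only [dist_eq_norm] at hH2
  have hp : 0 < (1 + θ) / 2 * γ / (γ - 2) := by
    refine div_pos (mul_pos ?_ ?_) ?_ <;> linarith
  have restrict {T : ℝ} (hT : t₀ ≤ T) := Set.Ici_subset_Ici.2 hT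
  have h₁ := le_max_left t₀ 1
  have hvalue : Tendsto (fun t ↦ F (x t)) atTop (𝓝 (F z)) :=
    (hsol.mono h₁).tendsto_value hα hθ hθ1 hp (le_max_right _ _) hconv hF hz
      (hg.mono (restrict h₁)) (hint.mono_set (restrict h₁))
  have hx : Tendsto x atTop (𝓝 z) := tendsto_of_tendsto_convexOn_of_growth hconv hK hH2 hvalue
  obtain ⟨T₁, hT₁⟩ := eventually_atTop.1 (hx.eventually (hH1.and hH2))
  obtain ⟨lam, q, M, T₂, hpar⟩ := exists_isAdmissible hα hθ hγ hK rfl hcase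
  obtain ⟨T, hT⟩ : ∃ T, max (max t₀ 1) (max T₁ T₂) ≤ T := ⟨_, le_rfl⟩
  simp only [max_le_iff] at hT
  obtain ⟨⟨htT, h1T⟩, hT₁T, hT₂T⟩ := hT
  obtain ⟨C, hC, hv⟩ := (hsol.mono htT).exists_norm_velocity_le (hpar T hT₂T) rfl hθ1 hγ hK h1T hF
    (hg.mono (restrict htT)) (hint.mono_set (restrict htT)) (fun t ht ↦ (hT₁ t (hT₁T.trans ht)).2)
    fun t ht ↦ by
      have := (hT₁ t (hT₁T.trans ht)).1
      rwa [one_div, ← div_eq_inv_mul, le_div_iff₀' (by linarith)] at this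
  exact ⟨C, hC, T, htT, hv⟩

end Lyapunov

theorem stmt_10
    {n : ℕ} (hn : 1 ≤ n)
    (F : EuclideanSpace ℝ (Fin n) → ℝ) (Fstar : ℝ)
    (Xstar : Set (EuclideanSpace ℝ (Fin n)))
    (hXstar : Xstar = {z | ∀ y, F z ≤ F y})
    (hne : Xstar.Nonempty)
    (hFstar : ∀ z ∈ Xstar, F z = Fstar)
    (hconv : ConvexOn ℝ Set.univ F)
    (hdiff : Differentiable ℝ F)
    (α t₀ θ γ r : ℝ) (hα : 0 < α) (ht₀ : 0 < t₀) (hθ : 0 ≤ θ) (hθ1 : θ ≤ 1)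
    (hγ : 2 < γ) (hr : r = (1 + θ) / 2)
    (g x x' x'' : ℝ → EuclideanSpace ℝ (Fin n))
    (hg : ContinuousOn g (Set.Ici t₀))
    (hx : ∀ t ∈ Set.Ici t₀, HasDerivAt x (x' t) t)
    (hx'd : ∀ t ∈ Set.Ici t₀, HasDerivAt x' (x'' t) t)
    (hx''c : ContinuousOn x'' (Set.Ici t₀))
    (hode : ∀ t ∈ Set.Ici t₀, x'' t + (α / t ^ θ) • x' t + gradient F (x t) = g t)
    (hH1 : ∀ z ∈ Xstar, ∃ η > 0, ∀ y : EuclideanSpace ℝ (Fin n),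
      ‖y - z‖ < η → F y - Fstar ≤ (1 / γ) * ⟪gradient F y, y - z⟫)
    (hH2 : ∀ z ∈ Xstar, ∃ K > 0, ∃ ε > 0, ∀ y : EuclideanSpace ℝ (Fin n),
      ‖y - z‖ < ε → K * Metric.infDist y Xstar ^ (γ : ℝ) ≤ F y - Fstar)
    (huniq : ∃ z, Xstar = {z})
    (hint : IntegrableOn (fun t : ℝ => t ^ (r * γ / (γ - 2)) * ‖g t‖) (Set.Ici t₀))
    (hcase : (θ = 1 ∧ (γ + 2) / (γ - 2) ≤ α) ∨ θ < 1) :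
    ∃ C > 0, ∃ t₁ ≥ t₀, ∀ t ≥ t₁,
      ‖x' t‖ ≤ C * t ^ (-(r * γ / (γ - 2))) := by
  obtain ⟨z, rfl⟩ := huniq
  have hz : ∀ y, F z ≤ F y := by simpa using hXstar.le (Set.mem_singleton z)
  simp only [Set.mem_singleton_iff, forall_eq, Metric.infDist_singleton, dist_eq_norm]
    at hFstar hH1 hH2
  subst hFstar
  have hsol : IsInertialSolution F α θ g x x' t₀ :=
    ⟨hx, fun t ht ↦ (hx'd t ht).congr_deriv (by rw [← hode t ht]; abel)⟩
  exact stmt_10_general hz hconv hdiff hα (by linarith) hθ1 hγ hr hsol hg hH1 hH2 hint hcase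
end
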